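/- arXiv:2501.17016 — 9 statements merged into one kernel-verified Lean document; each statement's English description precedes it below -/
import Mathlib

section
/- Under Assumption (A), fix i ∈ {1,…,n} and define Γ'ᵢ := {(λⱼ)_{j≠i} ∈ ℝ^{n−1} : (λ₁,…,λ_{i−1},R,λ_{i+1},…,λₙ) ∈ Γ for all sufficiently large R}. Then: (1) (λⱼ)_{j≠i} ∈ Γ'ᵢ if and only if (λ₁,…,λ_{i−1},R₀,λ_{i+1},…,λₙ) ∈ Γ for some R₀ ∈ ℝ, so Γ'ᵢ is exactly the image of Γ under the projection that forgets the i-th coordinate; (2) Γ'ᵢ is an open convex cone in ℝ^{n−1}, invariant under permutations of its coordinates; (3) Γ'ᵢ = Γ'ⱼ for all i, j (under the order-preserving identification of the remaining index sets); (4) Γ'ᵢ contains the open positive orthant {(λⱼ)_{j≠i} : λⱼ > 0 for all j ≠ i}. -/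
open Filter

/-- Assumption (A) from the paper: `Γ ⊆ ℝⁿ` is an open convex symmetric cone with
`Γₙ ⊆ Γ ⊆ Γ₁`, and `f : Γ → (0,∞)` is smooth, symmetric, concave, with positive partial
derivatives, vanishing at the boundary of `Γ`, and `f(Rλ) → +∞` as `R → +∞`. -/
structure AssumptionA (n : ℕ) (Γ : Set (Fin n → ℝ)) (f : (Fin n → ℝ) → ℝ) : Prop where
  isOpen : IsOpen Γ
  convex : Convex ℝ Γ
  cone : ∀ x ∈ Γ, ∀ t : ℝ, 0 < t → t • x ∈ Γ
  perm_invariant : ∀ x ∈ Γ, ∀ σ : Equiv.Perm (Fin n), (fun i => x (σ i)) ∈ Γ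
  orthant_subset : {x : Fin n → ℝ | ∀ i, 0 < x i} ⊆ Γ
  subset_halfspace : Γ ⊆ {x : Fin n → ℝ | 0 < ∑ i, x i}
  f_pos : ∀ x ∈ Γ, 0 < f x
  f_smooth : ContDiffOn ℝ (⊤ : ℕ∞) f Γ
  f_perm_invariant : ∀ x ∈ Γ, ∀ σ : Equiv.Perm (Fin n), f (fun i => x (σ i)) = f x
  f_concave : ConcaveOn ℝ Γ f
  f_deriv_pos : ∀ x ∈ Γ, ∀ i : Fin n, 0 < fderiv ℝ f x (Pi.single i 1)
  f_boundary_zero : ∀ x₀ ∈ frontier Γ, Tendsto f (nhdsWithin x₀ Γ) (nhds 0)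
  f_proper : ∀ x ∈ Γ, Tendsto (fun R : ℝ => f (R • x)) atTop atTop

/-- `Γ_∞`: the set of `λ ∈ ℝⁿ` such that for every `i`, replacing the `i`-th coordinate by any
sufficiently large `R` lands in `Γ`. -/
def GammaInfty (n : ℕ) (Γ : Set (Fin n → ℝ)) : Set (Fin n → ℝ) :=
  {x | ∀ i : Fin n, ∃ R₀ : ℝ, ∀ R ≥ R₀, Function.update x i R ∈ Γ}

/-- `f_{∞,i}(λ) = lim_{R→+∞} f(λ₁,…,λ_{i−1},R,λ_{i+1},…,λₙ)`, realized as a limsup in `EReal`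
(the limit exists in `(0,+∞]` since `f` is increasing in `λᵢ`). -/
noncomputable def fInftyi (n : ℕ) (f : (Fin n → ℝ) → ℝ) (i : Fin n) (x : Fin n → ℝ) : EReal :=
  Filter.limsup (fun R : ℝ => ((f (Function.update x i R) : ℝ) : EReal)) Filter.atTop

/-- `f_∞(λ) = min_{1 ≤ i ≤ n} f_{∞,i}(λ)`, with values in `(0,+∞]`. -/
noncomputable def fInfty (n : ℕ) (f : (Fin n → ℝ) → ℝ) (x : Fin n → ℝ) : EReal :=
  ⨅ i : Fin n, fInftyi n f i x

/-- `Γ'ᵢ`: the set of `(λⱼ)_{j≠i} ∈ ℝ^{n−1}` such that inserting any sufficiently large `R`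
at position `i` lands in `Γ`. -/
def GammaPrime (m : ℕ) (Γ : Set (Fin (m + 1) → ℝ)) (i : Fin (m + 1)) :
    Set (Fin m → ℝ) :=
  {y | ∃ R₀ : ℝ, ∀ R ≥ R₀, i.insertNth R y ∈ Γ}

theorem aux_add {n : ℕ} {Γ : Set (Fin n → ℝ)} {f : (Fin n → ℝ) → ℝ}
    (hA : AssumptionA n Γ f) {x y : Fin n → ℝ} (hx : x ∈ Γ) (hy : y ∈ Γ) : x + y ∈ Γ := by
  have h := hA.convex hx hy (a := 1/2) (b := 1/2) (by norm_num) (by norm_num) (by norm_num)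
  have h2 := hA.cone _ h 2 (by norm_num)
  convert h2 using 1
  ext k
  simp
  ring

theorem aux_mono {n : ℕ} {Γ : Set (Fin n → ℝ)} {f : (Fin n → ℝ) → ℝ}
    (hA : AssumptionA n Γ f) {x z : Fin n → ℝ} (hx : x ∈ Γ) (hz : ∀ k, x k ≤ z k) : z ∈ Γ := by
  have hc : Continuous (fun ε : ℝ => (fun k => x k - ε : Fin n → ℝ)) := by fun_prop
  have h0 : IsOpen ((fun ε : ℝ => (fun k => x k - ε : Fin n → ℝ)) ⁻¹' Γ) := hA.isOpen.preimage hc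
  have hm : (0 : ℝ) ∈ ((fun ε : ℝ => (fun k => x k - ε : Fin n → ℝ)) ⁻¹' Γ) := by
    simpa using hx
  obtain ⟨δ, hδ, hb⟩ := Metric.isOpen_iff.1 h0 0 hm
  have h1 : (δ / 2) ∈ Metric.ball (0 : ℝ) δ := by
    rw [Metric.mem_ball, Real.dist_eq, sub_zero, abs_of_pos (by positivity)]
    linarith
  have h2 := hb h1
  have h3 : (fun k => z k - x k + δ / 2) ∈ Γ := hA.orthant_subset (by
    intro k
    have := hz k
    show 0 < z k - x k + δ / 2
    linarith)
  have h4 := aux_add hA h2 h3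
  convert h4 using 1
  ext k
  simp

theorem aux_iff {m : ℕ} {Γ : Set (Fin (m + 1) → ℝ)} {f : (Fin (m + 1) → ℝ) → ℝ}
    (hA : AssumptionA (m + 1) Γ f) (i : Fin (m + 1)) (y : Fin m → ℝ) :
    y ∈ GammaPrime m Γ i ↔ ∃ R₀ : ℝ, i.insertNth R₀ y ∈ Γ := by
  constructor
  · rintro ⟨R, h⟩
    exact ⟨R, h R le_rfl⟩
  · rintro ⟨R, h⟩
    refine ⟨R, fun R' hR => aux_mono hA h fun k => ?_⟩
    refine Fin.succAboveCases i ?_ (fun k => ?_) k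
    · simpa using hR
    · simp

theorem aux_perm {m : ℕ} {Γ : Set (Fin (m + 1) → ℝ)} {f : (Fin (m + 1) → ℝ) → ℝ}
    (hA : AssumptionA (m + 1) Γ f) (i j : Fin (m + 1)) (y : Fin m → ℝ)
    (hy : y ∈ GammaPrime m Γ i) (σ : Equiv.Perm (Fin m)) :
    (fun k => y (σ k)) ∈ GammaPrime m Γ j := by
  rw [aux_iff hA] at hy ⊢
  obtain ⟨R, h⟩ := hy
  refine ⟨R, ?_⟩
  have h2 := hA.perm_invariant _ h
    (((finSuccEquiv' j).trans (Equiv.optionCongr σ)).trans (finSuccEquiv' i).symm)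
  convert h2 using 1
  ext k
  refine Fin.succAboveCases j ?_ (fun k => ?_) k
  · simp
  · simp

/-- Lemma 2.4 (1),(2) of the paper: `Γ'ᵢ` is the projection of `Γ` forgetting the `i`-th
coordinate; it is an open convex cone, invariant under permutations of its coordinates,
independent of `i`, and contains the open positive orthant. -/
theorem stmt_1 (m : ℕ) (Γ : Set (Fin (m + 1) → ℝ)) (f : (Fin (m + 1) → ℝ) → ℝ)
    (hA : AssumptionA (m + 1) Γ f) (i : Fin (m + 1)) :
    (∀ y : Fin m → ℝ, y ∈ GammaPrime m Γ i ↔ ∃ R₀ : ℝ, i.insertNth R₀ y ∈ Γ) ∧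
    GammaPrime m Γ i = (fun x : Fin (m + 1) → ℝ => x ∘ i.succAbove) '' Γ ∧
    IsOpen (GammaPrime m Γ i) ∧
    Convex ℝ (GammaPrime m Γ i) ∧
    (∀ y ∈ GammaPrime m Γ i, ∀ t : ℝ, 0 < t → t • y ∈ GammaPrime m Γ i) ∧
    (∀ y ∈ GammaPrime m Γ i, ∀ σ : Equiv.Perm (Fin m),
      (fun k => y (σ k)) ∈ GammaPrime m Γ i) ∧
    (∀ j : Fin (m + 1), GammaPrime m Γ i = GammaPrime m Γ j) ∧
    {y : Fin m → ℝ | ∀ k, 0 < y k} ⊆ GammaPrime m Γ i := by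
  refine ⟨aux_iff hA i, ?_, ?_, ?_, ?_, ?_, ?_, ?_⟩
  · ext y
    rw [aux_iff hA]
    constructor
    · rintro ⟨R, h⟩
      refine ⟨_, h, ?_⟩
      ext k
      simp
    · rintro ⟨x, hx, rfl⟩
      refine ⟨x i, ?_⟩
      convert hx using 1
      ext k
      refine Fin.succAboveCases i ?_ (fun k => ?_) k
      · simp
      · simp
  · have : GammaPrime m Γ i = ⋃ R : ℝ, (fun y : Fin m → ℝ =>
        (i.insertNth R y : Fin (m + 1) → ℝ)) ⁻¹' Γ := by
      ext y
      rw [aux_iff hA]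
      simp
    rw [this]
    refine isOpen_iUnion fun R => hA.isOpen.preimage ?_
    refine continuous_pi fun k => ?_
    refine Fin.succAboveCases i ?_ (fun k => ?_) k
    · simpa using continuous_const
    · simpa using continuous_apply k
  · intro y hy z hz a b ha hb hab
    rw [aux_iff hA] at hy hz ⊢
    obtain ⟨R, hR⟩ := hy
    obtain ⟨S, hS⟩ := hz
    refine ⟨a * R + b * S, ?_⟩
    convert hA.convex hR hS ha hb hab using 1
    ext k
    refine Fin.succAboveCases i ?_ (fun k => ?_) k
    · simp
    · simp
  · intro y hy t ht
    rw [aux_iff hA] at hy ⊢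
    obtain ⟨R, hR⟩ := hy
    refine ⟨t * R, ?_⟩
    convert hA.cone _ hR t ht using 1
    ext k
    refine Fin.succAboveCases i ?_ (fun k => ?_) k
    · simp
    · simp
  · intro y hy σ
    exact aux_perm hA i i y hy σ
  · intro j
    ext y
    exact ⟨fun h => aux_perm hA i j y h 1, fun h => aux_perm hA j i y h 1⟩
  · intro y hy
    rw [aux_iff hA]
    refine ⟨1, hA.orthant_subset fun k => ?_⟩
    refine Fin.succAboveCases i ?_ (fun k => ?_) k
    · simp
    · simpa using hy k
end

section
/- Under Assumption (A), fix i ∈ {1,…,n}. For R ∈ ℝ define f_{R,i} on Γ'_{R,i} := {(λⱼ)_{j≠i} : (λ₁,…,λ_{i−1},R,λ_{i+1},…,λₙ) ∈ Γ} by f_{R,i}((λⱼ)_{j≠i}) := f(λ₁,…,λ_{i−1},R,λ_{i+1},…,λₙ). Then the sets Γ'_{R,i} are convex and increase with R, f_{R,i} is monotone nondecreasing in R, and exactly one of the following holds: either f_{∞,i} ≡ +∞ on Γ'ᵢ, or f_{∞,i} is finite at every point of Γ'ᵢ, is a concave function on Γ'ᵢ, and f_{R,i} → f_{∞,i} as R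 → +∞ uniformly on every compact subset of Γ'ᵢ. -/
open Filter

open Topology

lemma ins_comb {m : ℕ} (i : Fin (m + 1)) (a b R S : ℝ) (y z : Fin m → ℝ) :
    (i.insertNth (a * R + b * S) (a • y + b • z) : Fin (m + 1) → ℝ) =
      a • (i.insertNth R y : Fin (m + 1) → ℝ) + b • (i.insertNth S z : Fin (m + 1) → ℝ) := by
  ext j
  refine Fin.succAboveCases i ?_ (fun k => ?_) j <;> simp

lemma ins_comb' {m : ℕ} (i : Fin (m + 1)) {a b : ℝ} (hab : a + b = 1) (R : ℝ) (y z : Fin m → ℝ) :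
    (i.insertNth R (a • y + b • z) : Fin (m + 1) → ℝ) =
      a • (i.insertNth R y : Fin (m + 1) → ℝ) + b • (i.insertNth R z : Fin (m + 1) → ℝ) := by
  rw [← ins_comb, ← add_mul, hab, one_mul]

lemma ins_cont {m : ℕ} (i : Fin (m + 1)) (R : ℝ) :
    Continuous (fun y : Fin m → ℝ => (i.insertNth R y : Fin (m + 1) → ℝ)) :=
  continuous_const.finInsertNth i continuous_id

lemma add_mem_G {n : ℕ} {Γ : Set (Fin n → ℝ)} {f : (Fin n → ℝ) → ℝ} (hA : AssumptionA n Γ f)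
    {x v : Fin n → ℝ} (hx : x ∈ Γ) (hv : ∀ i, 0 ≤ v i) : x + v ∈ Γ := by
  have hc : Tendsto (fun e : ℝ => x - e • (1 : Fin n → ℝ)) (𝓝[>] 0) (𝓝 x) := by
    have : Continuous (fun e : ℝ => x - e • (1 : Fin n → ℝ)) := by fun_prop
    have h := this.tendsto 0
    simp only [zero_smul, sub_zero] at h
    exact h.mono_left nhdsWithin_le_nhds
  obtain ⟨e, he, he0⟩ := ((hc.eventually (hA.isOpen.mem_nhds hx)).and self_mem_nhdsWithin).exists
  have he0 : 0 < e := he0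
  have h2 : e • (1 : Fin n → ℝ) + v ∈ Γ := hA.orthant_subset (by
    intro i
    have := hv i
    simp
    linarith)
  have h3 := hA.convex he h2 (a := 1 / 2) (b := 1 / 2) (by norm_num) (by norm_num) (by norm_num)
  have h4 := hA.cone _ h3 2 (by norm_num)
  convert h4 using 1
  ext j
  simp
  ring

lemma f_mono_G {n : ℕ} {Γ : Set (Fin n → ℝ)} {f : (Fin n → ℝ) → ℝ} (hA : AssumptionA n Γ f)
    {x v : Fin n → ℝ} (hx : x ∈ Γ) (hv : ∀ i, 0 ≤ v i) : f x ≤ f (x + v) := by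
  by_contra! h
  have hp := hA.f_pos _ (add_mem_G hA hx hv)
  have hfx := hA.f_pos _ hx
  set a := f x
  set b := f (x + v)
  obtain ⟨s, hs⟩ : ∃ s, s = (a - b) / a := ⟨_, rfl⟩
  have hs0 : 0 < s := hs ▸ div_pos (by linarith) hfx
  have hs1 : s ≤ 1 := by rw [hs, div_le_one hfx]; linarith
  have hsa : s * a = a - b := by rw [hs]; field_simp
  have hz : x + s⁻¹ • v ∈ Γ := add_mem_G hA hx (fun i => by
    have := hv i
    simp only [Pi.smul_apply, smul_eq_mul]; positivity)
  have hpz := hA.f_pos _ hz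
  have h3 := hA.f_concave.2 hx hz (show 0 ≤ 1 - s by linarith) hs0.le (by ring)
  have : (1 - s) • x + s • (x + s⁻¹ • v) = x + v := by
    ext j
    simp
    field_simp
    ring
  rw [this] at h3
  simp only [smul_eq_mul] at h3
  have : 0 < s * f (x + s⁻¹ • v) := by positivity
  change (1 - s) * a + _ ≤ b at h3
  nlinarith

lemma ins_add {m : ℕ} (i : Fin (m + 1)) (R R' : ℝ) (y : Fin m → ℝ) :
    (i.insertNth R' y : Fin (m + 1) → ℝ) = i.insertNth R y + Pi.single i (R' - R) := by
  ext j
  refine Fin.succAboveCases i ?_ (fun k => ?_) j <;> simp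

lemma single_nn {m : ℕ} (i : Fin (m + 1)) {R R' : ℝ} (h : R ≤ R') (j : Fin (m + 1)) :
    0 ≤ (Pi.single i (R' - R) : Fin (m + 1) → ℝ) j := by
  refine Fin.succAboveCases i ?_ (fun k => ?_) j <;> simp [h]

/-- Lemma 2.4 (3) of the paper: the slice domains `Γ'_{R,i}` are convex and increase with `R`,
the slice functions `f_{R,i}` are nondecreasing in `R`, and exactly one of the following holds:
either `f_{∞,i} ≡ +∞` on `Γ'ᵢ`, or `f_{∞,i}` is finite everywhere on `Γ'ᵢ`, concave, and the
convergence `f_{R,i} → f_{∞,i}` is uniform on compact subsets of `Γ'ᵢ`. -/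
theorem stmt_2 (m : ℕ) (Γ : Set (Fin (m + 1) → ℝ)) (f : (Fin (m + 1) → ℝ) → ℝ)
    (hA : AssumptionA (m + 1) Γ f) (i : Fin (m + 1)) :
    (∀ R : ℝ, Convex ℝ {y : Fin m → ℝ | i.insertNth R y ∈ Γ}) ∧
    (∀ R R' : ℝ, R ≤ R' →
      {y : Fin m → ℝ | i.insertNth R y ∈ Γ} ⊆ {y : Fin m → ℝ | i.insertNth R' y ∈ Γ}) ∧
    (∀ R R' : ℝ, R ≤ R' → ∀ y : Fin m → ℝ, i.insertNth R y ∈ Γ →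
      f (i.insertNth R y) ≤ f (i.insertNth R' y)) ∧
    Xor'
      (∀ y ∈ GammaPrime m Γ i,
        Tendsto (fun R : ℝ => f (i.insertNth R y)) atTop atTop)
      (∃ g : (Fin m → ℝ) → ℝ,
        ConcaveOn ℝ (GammaPrime m Γ i) g ∧
        (∀ y ∈ GammaPrime m Γ i,
          Tendsto (fun R : ℝ => f (i.insertNth R y)) atTop (nhds (g y))) ∧
        (∀ K ⊆ GammaPrime m Γ i, IsCompact K →
          TendstoUniformlyOn (fun (R : ℝ) (y : Fin m → ℝ) => f (i.insertNth R y)) g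
            atTop K)) := by
  have hconv : ∀ R : ℝ, Convex ℝ {y : Fin m → ℝ | i.insertNth R y ∈ Γ} := by
    intro R y hy z hz a b ha hb hab
    simp only [Set.mem_ofPred_eq] at *
    rw [ins_comb' i hab]
    exact hA.convex hy hz ha hb hab
  have hinc : ∀ R R' : ℝ, R ≤ R' → ∀ y : Fin m → ℝ, i.insertNth R y ∈ Γ →
      i.insertNth R' y ∈ Γ := by
    intro R R' h y hy
    rw [ins_add i R R' y]
    exact add_mem_G hA hy (single_nn i h)
  have hmono : ∀ R R' : ℝ, R ≤ R' → ∀ y : Fin m → ℝ, i.insertNth R y ∈ Γ →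
      f (i.insertNth R y) ≤ f (i.insertNth R' y) := by
    intro R R' h y hy
    rw [ins_add i R R' y]
    exact f_mono_G hA hy (single_nn i h)
  refine ⟨hconv, fun R R' h y hy => hinc R R' h y hy, hmono, ?_⟩
  have hmem : ∀ y, y ∈ GammaPrime m Γ i ↔ ∃ R, i.insertNth R y ∈ Γ := fun y =>
    ⟨fun ⟨R, h⟩ => ⟨R, h R le_rfl⟩, fun ⟨R, h⟩ => ⟨R, fun S hS => hinc R S hS y h⟩⟩
  have hUnion : GammaPrime m Γ i = ⋃ R : ℝ, {y : Fin m → ℝ | i.insertNth R y ∈ Γ} := by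
    ext y; simp [hmem]
  have hopR : ∀ R : ℝ, IsOpen {y : Fin m → ℝ | i.insertNth R y ∈ Γ} := fun R =>
    hA.isOpen.preimage (ins_cont i R)
  have hop : IsOpen (GammaPrime m Γ i) := hUnion ▸ isOpen_iUnion hopR
  have hdir : Directed (· ⊆ ·) (fun R : ℝ => {y : Fin m → ℝ | i.insertNth R y ∈ Γ}) :=
    directed_of_isDirected_le fun R S h y hy => hinc R S h y hy
  have hcv : Convex ℝ (GammaPrime m Γ i) := hUnion ▸ hdir.convex_iUnion (fun {R} => hconv R)
  have hev : ∀ y ∈ GammaPrime m Γ i, ∀ᶠ R : ℝ in atTop, i.insertNth R y ∈ Γ := fun y ⟨R, h⟩ =>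
    eventually_atTop.2 ⟨R, h⟩
  have hne : (1 : Fin m → ℝ) ∈ GammaPrime m Γ i := by
    rw [hmem]
    refine ⟨1, hA.orthant_subset fun j => ?_⟩
    refine Fin.succAboveCases i ?_ (fun k => ?_) j <;> simp
  have hdich : ∀ y ∈ GammaPrime m Γ i,
      Tendsto (fun R : ℝ => f (i.insertNth R y)) atTop atTop ∨
      ∃ l, Tendsto (fun R : ℝ => f (i.insertNth R y)) atTop (𝓝 l) := by
    rintro y ⟨R₀, h⟩
    have hm : Monotone (fun R : ℝ => f (i.insertNth (max R R₀) y)) := fun R S hRS =>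
      hmono _ _ (max_le_max_right _ hRS) y (h _ (le_max_right _ _))
    have he : (fun R : ℝ => f (i.insertNth (max R R₀) y)) =ᶠ[atTop]
        (fun R : ℝ => f (i.insertNth R y)) := by
      filter_upwards [eventually_ge_atTop R₀] with R hR
      rw [max_eq_left hR]
    exact (tendsto_atTop_of_monotone hm).imp (fun h => h.congr' he)
      (fun ⟨l, h⟩ => ⟨l, h.congr' he⟩)
  by_cases hall : ∀ y ∈ GammaPrime m Γ i,
        Tendsto (fun R : ℝ => f (i.insertNth R y)) atTop atTop
  · refine Or.inl ⟨hall, ?_⟩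
    rintro ⟨g, -, hg, -⟩
    exact not_tendsto_nhds_of_tendsto_atTop (hall _ hne) _ (hg _ hne)
  · refine Or.inr ⟨?_, hall⟩
    push Not at hall
    obtain ⟨y₀, hy₀, hnot⟩ := hall
    obtain ⟨l, hl⟩ := (hdich y₀ hy₀).resolve_left hnot
    have hfin : ∀ y ∈ GammaPrime m Γ i,
        ∃ l, Tendsto (fun R : ℝ => f (i.insertNth R y)) atTop (𝓝 l) := by
      intro y hy
      refine (hdich y hy).resolve_left fun hy' => ?_
      have hc : Tendsto (fun e : ℝ => y₀ + e • (y₀ - y)) (𝓝[>] 0) (𝓝 y₀) := by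
        have : Continuous (fun e : ℝ => y₀ + e • (y₀ - y)) := by fun_prop
        have h := this.tendsto 0
        simp only [zero_smul, add_zero] at h
        exact h.mono_left nhdsWithin_le_nhds
      obtain ⟨e, he, he0⟩ :=
        ((hc.eventually (hop.mem_nhds hy₀)).and self_mem_nhdsWithin).exists
      have he0 : 0 < e := he0
      have hab : e / (1 + e) + 1 / (1 + e) = 1 := by field_simp; ring
      have hcomb : (e / (1 + e)) • y + (1 / (1 + e)) • (y₀ + e • (y₀ - y)) = y₀ := by
        ext j
        simp
        field_simp
        ring
      have hle : ∀ᶠ R : ℝ in atTop,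
          e / (1 + e) * f (i.insertNth R y) ≤ f (i.insertNth R y₀) := by
        filter_upwards [hev y hy, hev _ he] with R h1 h2
        have h3 := hA.f_concave.2 h1 h2 (show 0 ≤ e / (1 + e) by positivity)
          (show 0 ≤ 1 / (1 + e) by positivity) hab
        rw [← ins_comb' i hab, hcomb] at h3
        have h4 := hA.f_pos _ h2
        simp only [smul_eq_mul] at h3
        have : 0 < 1 / (1 + e) * f (i.insertNth R (y₀ + e • (y₀ - y))) := by positivity
        linarith
      exact hnot (tendsto_atTop_mono' _ hle (hy'.const_mul_atTop (by positivity)))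
    classical
    choose! g hg using hfin
    have hgc : ConcaveOn ℝ (GammaPrime m Γ i) g := by
      refine ⟨hcv, fun y hy z hz a b ha hb hab => ?_⟩
      refine le_of_tendsto_of_tendsto (((hg y hy).const_mul a).add ((hg z hz).const_mul b))
        (hg _ (hcv hy hz ha hb hab)) ?_
      filter_upwards [hev y hy, hev z hz] with R h1 h2
      rw [ins_comb' i hab]
      exact hA.f_concave.2 h1 h2 ha hb hab
    refine ⟨g, hgc, hg, fun K hK hKc => ?_⟩
    obtain ⟨R₀, hR₀⟩ := hKc.elim_directed_cover _ hopR (hUnion ▸ hK) hdir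
    have hin : ∀ R, ∀ y ∈ K, i.insertNth (max R R₀) y ∈ Γ := fun R y hy =>
      hinc R₀ _ (le_max_right _ _) y (hR₀ hy)
    have hu : TendstoUniformlyOn (fun (R : ℝ) (y : Fin m → ℝ) => f (i.insertNth (max R R₀) y)) g
        atTop K := by
      refine Monotone.tendstoUniformlyOn_of_forall_tendsto hKc ?_ ?_
        ((hgc.continuousOn hop).mono hK) ?_
      · intro R
        exact hA.f_smooth.continuousOn.comp (ins_cont i _).continuousOn (fun y hy => hin R y hy)
      · intro y hy R S hRS
        exact hmono _ _ (max_le_max_right _ hRS) y (hin R y hy)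
      · intro y hy
        refine (hg y (hK hy)).congr' ?_
        filter_upwards [eventually_ge_atTop R₀] with R hR
        rw [max_eq_left hR]
    refine hu.congr ?_
    filter_upwards [eventually_ge_atTop R₀] with R hR y _
    simp only [max_eq_left hR]
end

section
/- Under Assumption (A), let K ⊆ Γ_∞ be a compact subset. Then there exists R₀ > 0 such that for every λ ∈ K and every λ̃ in the closed positive orthant Γ̄ₙ = {μ ∈ ℝⁿ : μᵢ ≥ 0 for all i} with |λ̃| ≥ R₀, one has λ + λ̃ ∈ Γ. -/
open Filter

theorem aux_mono_s5 {n : ℕ} {Γ : Set (Fin n → ℝ)} {f : (Fin n → ℝ) → ℝ}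
    (hA : AssumptionA n Γ f) {u v : Fin n → ℝ} (hu : u ∈ Γ) (huv : u ≤ v) : v ∈ Γ := by
  have hc : Continuous (fun e : ℝ => fun i => u i - e) := by fun_prop
  have h0 : ∀ᶠ e in nhdsWithin (0:ℝ) (Set.Ioi 0), (fun i => u i - e) ∈ Γ := by
    apply Filter.Eventually.filter_mono nhdsWithin_le_nhds
    apply hc.continuousAt.eventually_mem
    apply hA.isOpen.mem_nhds
    simpa using hu
  obtain ⟨e, he, hpos⟩ := (h0.and self_mem_nhdsWithin).exists
  have hpos : 0 < e := hpos
  have h2 : (fun i => v i - u i + e) ∈ Γ := by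
    apply hA.orthant_subset
    intro i
    have := huv i
    show 0 < v i - u i + e
    linarith
  have h3 := hA.convex he h2 (a := 1/2) (b := 1/2) (by norm_num) (by norm_num) (by norm_num)
  have h4 := hA.cone _ h3 2 (by norm_num)
  convert h4 using 1
  ext i
  simp
  ring

theorem aux_coord {n : ℕ} {Γ : Set (Fin n → ℝ)} {f : (Fin n → ℝ) → ℝ}
    (hA : AssumptionA n Γ f) {K : Set (Fin n → ℝ)} (hKsub : K ⊆ GammaInfty n Γ)
    (hK : IsCompact K) (i : Fin n) :
    ∃ M : ℝ, ∀ x ∈ K, ∀ y : Fin n → ℝ, (∀ j, 0 ≤ y j) → M ≤ y i → x + y ∈ Γ := by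
  refine hK.induction_on (p := fun S => ∃ M : ℝ, ∀ x ∈ S, ∀ y : Fin n → ℝ,
    (∀ j, 0 ≤ y j) → M ≤ y i → x + y ∈ Γ) ?_ ?_ ?_ ?_
  · exact ⟨0, by simp⟩
  · intro s t hst ht
    obtain ⟨M, hM⟩ := ht
    exact ⟨M, fun x hx => hM x (hst hx)⟩
  · intro s t hs ht
    obtain ⟨M, hM⟩ := hs
    obtain ⟨N, hN⟩ := ht
    refine ⟨max M N, ?_⟩
    rintro x (hx | hx) y hy h
    · exact hM x hx y hy ((le_max_left _ _).trans h)
    · exact hN x hx y hy ((le_max_right _ _).trans h)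
  · intro x hx
    obtain ⟨R, hR⟩ := hKsub hx i
    have hR := hR R le_rfl
    have hc : Continuous (fun z : Fin n → ℝ => Function.update z i R) :=
      continuous_id.update i continuous_const
    have h1 : ∀ᶠ z in nhds x, Function.update z i R ∈ Γ :=
      hc.continuousAt.eventually_mem (hA.isOpen.mem_nhds hR)
    have h2 : ∀ᶠ z in nhds x, x i - 1 < z i :=
      (continuous_apply i).continuousAt.eventually_const_lt (by linarith)
    refine ⟨_, mem_nhdsWithin_of_mem_nhds (h1.and h2), R - x i + 1, ?_⟩
    rintro z ⟨hz1, hz2⟩ y hy h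
    apply aux_mono_s5 hA hz1
    intro j
    by_cases hj : j = i
    · subst hj
      simp only [Function.update_self, Pi.add_apply]
      linarith
    · simp only [Function.update_of_ne hj, Pi.add_apply]
      linarith [hy j]

/-- Lemma 2.9 (1) of the paper: for every compact `K ⊆ Γ_∞` there is `R₀ > 0` such that for
every `λ ∈ K` and every `λ̃` in the closed positive orthant with Euclidean norm `≥ R₀`,
one has `λ + λ̃ ∈ Γ`. -/
theorem stmt_5 (n : ℕ) (Γ : Set (Fin n → ℝ)) (f : (Fin n → ℝ) → ℝ)
    (hA : AssumptionA n Γ f)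
    (K : Set (Fin n → ℝ)) (hKsub : K ⊆ GammaInfty n Γ) (hK : IsCompact K) :
    ∃ R₀ : ℝ, 0 < R₀ ∧
      ∀ x ∈ K, ∀ y : Fin n → ℝ, (∀ i, 0 ≤ y i) →
        R₀ ≤ Real.sqrt (∑ i, y i ^ 2) → x + y ∈ Γ := by
  choose M hM using aux_coord hA hKsub hK
  refine ⟨Real.sqrt (∑ i, |M i| ^ 2) + 1, by positivity, ?_⟩
  intro x hx y hy h
  by_contra hcon
  have hlt : ∀ i, y i < M i := fun i => by
    by_contra hi
    exact hcon (hM i x hx y hy (not_lt.mp hi))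
  have : Real.sqrt (∑ i, y i ^ 2) ≤ Real.sqrt (∑ i, |M i| ^ 2) := by
    apply Real.sqrt_le_sqrt
    apply Finset.sum_le_sum
    intro i _
    exact pow_le_pow_left₀ (hy i) ((hlt i).le.trans (le_abs_self _)) 2
  linarith
end

section
/- Under Assumption (A): (1) either Γ_∞ = ℝⁿ, or Γ_∞ ⊆ Γ₁ = {λ ∈ ℝⁿ : Σᵢ λᵢ > 0}; (2) if Γ_∞ = ℝⁿ, then f_∞ ≡ +∞ on Γ_∞. -/
open Filter

theorem A_add {n : ℕ} {Γ : Set (Fin n → ℝ)} {f : (Fin n → ℝ) → ℝ}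
    (hA : AssumptionA n Γ f) {a b : Fin n → ℝ} (ha : a ∈ Γ) (hb : b ∈ Γ) : a + b ∈ Γ := by
  have h := hA.convex ha hb (a := 1/2) (b := 1/2) (by norm_num) (by norm_num) (by norm_num)
  have h2 := hA.cone _ h 2 (by norm_num)
  have e : (2:ℝ) • ((1/2:ℝ) • a + (1/2:ℝ) • b) = a + b := by
    ext i; simp; ring
  rwa [e] at h2

theorem A_sum {n : ℕ} {Γ : Set (Fin n → ℝ)} {f : (Fin n → ℝ) → ℝ}
    (hA : AssumptionA n Γ f) {ι : Type} (s : Finset ι) (hs : s.Nonempty)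
    (g : ι → Fin n → ℝ) (hg : ∀ i ∈ s, g i ∈ Γ) : ∑ i ∈ s, g i ∈ Γ := by
  classical
  induction hs using Finset.Nonempty.cons_induction with
  | singleton a => simpa using hg
  | cons a s ha hs ih =>
    rw [Finset.sum_cons]
    exact A_add hA (hg _ (by simp)) (ih fun i hi => hg i (by simp [hi]))

theorem A_mono {n : ℕ} {Γ : Set (Fin n → ℝ)} {f : (Fin n → ℝ) → ℝ}
    (hA : AssumptionA n Γ f) {a b : Fin n → ℝ} (ha : a ∈ Γ) (hb : b ∈ Γ) :
    f a ≤ f (a + b) := by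
  by_contra! hlt
  have hp := hA.f_pos _ (A_add hA ha hb)
  have hpa := hA.f_pos _ ha
  -- weight `e` with `(1 - e) * f a = f (a+b)`
  set e := 1 - f (a + b) / f a with he
  have hq : f (a + b) / f a < 1 := (div_lt_one hpa).2 hlt
  have hq0 : 0 < f (a + b) / f a := div_pos hp hpa
  have he0 : 0 < e := by linarith
  have hm : a + e⁻¹ • b ∈ Γ := A_add hA ha (hA.cone _ hb _ (inv_pos.2 he0))
  have hc := hA.f_concave.2 ha hm (show (0:ℝ) ≤ 1 - e by linarith) he0.le (by ring)
  have ee : (1 - e) • a + e • (a + e⁻¹ • b) = a + b := by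
    ext i; simp; field_simp; ring
  rw [ee] at hc
  simp only [smul_eq_mul] at hc
  have h1 : (1 - e) * f a = f (a + b) := by
    rw [he]; field_simp; ring
  have h2 := mul_pos he0 (hA.f_pos _ hm)
  linarith

/-- scaling: `update x i R - t • V` is positive for large `t` and then large `R`. -/
theorem A_large {n : ℕ} {V : Fin n → ℝ} {i : Fin n}
    (hV : ∀ j, j ≠ i → V j < 0) (y : Fin n → ℝ) :
    ∀ᶠ t : ℝ in atTop, ∀ R ≥ t * V i + 1, ∀ j, 0 < (Function.update y i R - t • V) j := by
  have h : ∀ᶠ t : ℝ in atTop, ∀ j, j ≠ i → t * V j < y j := by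
    rw [eventually_all]
    intro j
    by_cases hj : j = i
    · simp [hj]
    · have := (tendsto_id (α := ℝ) (x := atTop)).atTop_mul_const_of_neg (hV j hj)
      filter_upwards [this.eventually_lt_atBot (y j)] with t ht _ using ht
  filter_upwards [h] with t ht R hR j
  by_cases hj : j = i
  · subst hj; simp; linarith
  · simp [Function.update_of_ne hj]; exact ht j hj

theorem A_univ {n : ℕ} {Γ : Set (Fin n → ℝ)} {f : (Fin n → ℝ) → ℝ}
    (hA : AssumptionA n Γ f) {V : Fin n → ℝ} {i₀ : Fin n} (hVΓ : V ∈ Γ)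
    (hV : ∀ j, j ≠ i₀ → V j < 0) : GammaInfty n Γ = Set.univ := by
  refine Set.eq_univ_of_forall fun y i => ?_
  have hW := hA.perm_invariant V hVΓ (Equiv.swap i i₀)
  set W : Fin n → ℝ := fun j => V (Equiv.swap i i₀ j) with hWd
  have hWn : ∀ j, j ≠ i → W j < 0 := by
    intro j hj
    apply hV
    intro h
    apply hj
    apply (Equiv.swap i i₀).injective
    simpa using h
  obtain ⟨t, ht, ht0⟩ := ((A_large hWn y).and (eventually_gt_atTop 0)).exists
  refine ⟨t * W i + 1, fun R hR => ?_⟩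
  have := A_add hA (hA.cone _ hW t ht0) (hA.orthant_subset (ht R hR))
  simpa using this

theorem A_one {n : ℕ} {Γ : Set (Fin n → ℝ)} {f : (Fin n → ℝ) → ℝ}
    (hA : AssumptionA n Γ f) {w : Fin n → ℝ} {i : Fin n} (hw : w ∈ Γ)
    (hs : ∑ j ∈ Finset.univ.erase i, w j ≤ 0) : GammaInfty n Γ = Set.univ := by
  classical
  let s : Finset (Equiv.Perm (Fin n)) := Finset.univ.filter fun σ => σ i = i
  let V : Fin n → ℝ := ∑ σ ∈ s, fun j => w (σ j)
  have hVΓ : V ∈ Γ := A_sum hA s ⟨1, by simp [s]⟩ _ fun σ _ => hA.perm_invariant w hw σ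
  have hVj : ∀ j, V j = ∑ σ ∈ s, w (σ j) := fun j => by simp [V, Finset.sum_apply]
  have hconst : ∀ j k, j ≠ i → k ≠ i → V j = V k := by
    intro j k hj hk
    rw [hVj, hVj]
    refine Finset.sum_bij' (fun σ _ => σ * Equiv.swap j k) (fun σ _ => σ * Equiv.swap j k)
      ?_ ?_ ?_ ?_ ?_
    · intro σ hσ
      simpa [s, Equiv.swap_apply_of_ne_of_ne hj.symm hk.symm] using hσ
    · intro σ hσ
      simpa [s, Equiv.swap_apply_of_ne_of_ne hj.symm hk.symm] using hσ
    · intro σ _; simp [mul_assoc]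
    · intro σ _; simp [mul_assoc]
    · intro σ _; simp
  have htot : ∑ j ∈ Finset.univ.erase i, V j ≤ 0 := by
    simp_rw [hVj]
    rw [Finset.sum_comm]
    refine Finset.sum_nonpos fun σ hσ => ?_
    have hσi : σ i = i := by simpa [s] using hσ
    have h1 := Equiv.sum_comp σ w
    rw [← Finset.add_sum_erase _ _ (Finset.mem_univ i), hσi,
      ← Finset.add_sum_erase _ w (Finset.mem_univ i)] at h1
    linarith
  have hVn : ∀ j, j ≠ i → V j ≤ 0 := by
    intro j hj
    by_contra! hpos
    have : 0 < ∑ j ∈ Finset.univ.erase i, V j := by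
      refine Finset.sum_pos (fun k hk => ?_) ⟨j, by simp [hj]⟩
      rw [hconst k j (Finset.ne_of_mem_erase hk) hj]; exact hpos
    linarith
  have hcont : Tendsto (fun ε : ℝ => V - fun _ => ε) (nhdsWithin 0 (Set.Ioi 0)) (nhds V) := by
    have : Continuous (fun ε : ℝ => V - fun _ => ε) := by fun_prop
    have h := (this.tendsto 0).mono_left (nhdsWithin_le_nhds (s := Set.Ioi (0:ℝ)))
    have e : (V - fun _ => (0:ℝ)) = V := by ext; simp
    rwa [e] at h
  obtain ⟨ε, h1, h2⟩ := ((hcont.eventually (hA.isOpen.mem_nhds hVΓ)).and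
    (self_mem_nhdsWithin (s := Set.Ioi (0:ℝ)) (a := 0))).exists
  refine A_univ hA h1 (i₀ := i) fun j hj => ?_
  have := hVn j hj
  have h2' : 0 < ε := h2
  simp only [Pi.sub_apply]
  linarith

/-- Lemma 2.8 of the paper: (1) either `Γ_∞ = ℝⁿ` or `Γ_∞ ⊆ Γ₁ = {Σᵢ λᵢ > 0}`;
(2) if `Γ_∞ = ℝⁿ` then `f_∞ ≡ +∞`. -/
theorem stmt_9 (n : ℕ) (Γ : Set (Fin n → ℝ)) (f : (Fin n → ℝ) → ℝ)
    (hA : AssumptionA n Γ f) :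
    (GammaInfty n Γ = Set.univ ∨
      GammaInfty n Γ ⊆ {x : Fin n → ℝ | 0 < ∑ i, x i}) ∧
    (GammaInfty n Γ = Set.univ → ∀ x : Fin n → ℝ, fInfty n f x = ⊤) := by
  constructor
  · by_contra! hcon
    obtain ⟨h1, h2⟩ := hcon
    obtain ⟨x, hx, hxs⟩ := Set.not_subset.1 h2
    simp only [Set.mem_setOf_eq, not_lt] at hxs
    have hi : ∃ i : Fin n, ∑ j ∈ Finset.univ.erase i, x j ≤ 0 := by
      by_cases h : ∃ i, 0 ≤ x i
      · obtain ⟨i, hi⟩ := h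
        refine ⟨i, ?_⟩
        rw [← Finset.add_sum_erase _ _ (Finset.mem_univ i)] at hxs
        linarith
      · push Not at h
        have hn : Nonempty (Fin n) := by
          by_contra hn
          rw [not_nonempty_iff] at hn
          have := hA.subset_halfspace (hA.orthant_subset (a := x) (fun i => hn.elim i))
          simp at this
        obtain ⟨i⟩ := hn
        exact ⟨i, Finset.sum_nonpos fun j _ => (h j).le⟩
    obtain ⟨i, hi⟩ := hi
    obtain ⟨R, hR⟩ := hx i
    refine h1 (A_one hA (hR R le_rfl) (i := i) ?_)
    rw [Finset.sum_congr rfl fun j hj => Function.update_of_ne (Finset.ne_of_mem_erase hj) R x]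
    exact hi
  · intro hU x
    refine iInf_eq_top.2 fun i => ?_
    have hm : (fun _ => -1 : Fin n → ℝ) ∈ GammaInfty n Γ := hU ▸ Set.mem_univ _
    obtain ⟨R₀, hR₀⟩ := hm i
    have hVΓ := hR₀ R₀ le_rfl
    set V := Function.update (fun _ => -1 : Fin n → ℝ) i R₀ with hVd
    have hV : ∀ j, j ≠ i → V j < 0 := fun j hj => by simp [hVd, Function.update_of_ne hj]
    have hT : Tendsto (fun R : ℝ => f (Function.update x i R)) atTop atTop := by
      refine tendsto_atTop.2 fun C => ?_
      obtain ⟨t, ⟨ht, ht0⟩, htC⟩ := (((A_large hV x).and (eventually_gt_atTop 0)).and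
        ((hA.f_proper V hVΓ).eventually_ge_atTop C)).exists
      filter_upwards [eventually_ge_atTop (t * V i + 1)] with R hR
      have := A_mono hA (hA.cone _ hVΓ t ht0) (hA.orthant_subset (ht R hR))
      rw [add_sub_cancel] at this
      exact htC.trans this
    exact (EReal.tendsto_coe_nhds_top_iff.2 hT).limsup_eq
end

section
/- Let C ⊆ ℝⁿ be a convex cone, invariant under permutations of the coordinates, containing the open positive orthant Γₙ = {λ ∈ ℝⁿ : λᵢ > 0 for all i}. If C contains a point λ₀ with Σᵢ (λ₀)ᵢ < 0, then C = ℝⁿ. -/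
/-- If a convex cone `C ⊆ ℝⁿ`, invariant under permutations of the coordinates and containing
the open positive orthant, contains a point whose coordinate sum is negative, then `C = ℝⁿ`. -/
theorem stmt_10 (n : ℕ) (C : Set (Fin n → ℝ))
    (hconv : Convex ℝ C)
    (hcone : ∀ x ∈ C, ∀ t : ℝ, 0 < t → t • x ∈ C)
    (hperm : ∀ x ∈ C, ∀ σ : Equiv.Perm (Fin n), (fun i => x (σ i)) ∈ C)
    (horthant : {x : Fin n → ℝ | ∀ i, 0 < x i} ⊆ C)
    (x₀ : Fin n → ℝ) (hx₀ : x₀ ∈ C) (hsum : ∑ i, x₀ i < 0) :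
    C = Set.univ := by
  have hn : n ≠ 0 := by
    rintro rfl
    simp at hsum
  haveI : NeZero n := ⟨hn⟩
  have hnpos : (0 : ℝ) < n := by exact_mod_cast Nat.pos_of_ne_zero hn
  have havg : ∑ k : Fin n, ((n : ℝ)⁻¹) • (fun i => x₀ (Equiv.addLeft i k)) ∈ C := by
    refine hconv.sum_mem (fun _ _ => by positivity) ?_ ?_
    · simp [hn]
    · intro k _
      exact hperm x₀ hx₀ (Equiv.addRight k)
  have hc : (fun _ : Fin n => (n : ℝ)⁻¹ * ∑ i, x₀ i) ∈ C := by
    convert havg using 1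
    funext i
    rw [Finset.sum_apply]
    simp only [Pi.smul_apply, smul_eq_mul]
    rw [← Finset.mul_sum, Equiv.sum_comp (Equiv.addLeft i) x₀]
  set c := (n : ℝ)⁻¹ * ∑ i, x₀ i with hcdef
  have hcneg : c < 0 := mul_neg_of_pos_of_neg (by positivity) hsum
  have hadd : ∀ x ∈ C, ∀ z ∈ C, x + z ∈ C := by
    intro x hx z hz
    have h := hconv (hcone x hx 2 two_pos) (hcone z hz 2 two_pos)
      (a := 1 / 2) (b := 1 / 2) (by norm_num) (by norm_num) (by norm_num)
    simpa [smul_smul] using h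
  refine Set.eq_univ_of_forall fun y => ?_
  set M : ℝ := 1 + ∑ i, |y i| with hM
  have hMpos : 0 < M := by positivity
  have h1 : (fun i => y i + M) ∈ C := by
    apply horthant
    intro i
    have h2 : |y i| ≤ ∑ i, |y i| :=
      Finset.single_le_sum (f := fun i => |y i|) (fun j _ => abs_nonneg _) (Finset.mem_univ i)
    have h3 := neg_abs_le (y i)
    show 0 < y i + M
    linarith
  have h2 := hadd _ h1 _ (hcone _ hc (M / (-c)) (div_pos hMpos (by linarith)))
  convert h2 using 1
  funext i
  simp only [Pi.add_apply, Pi.smul_apply, smul_eq_mul]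
  have : c ≠ 0 := hcneg.ne
  field_simp
  ring
end

section
/- Let Ω ⊆ ℝⁿ be an open convex set and let u : Ω → ℝ be strictly convex in the following sense: for every x₀ ∈ Ω there exists an affine function l on ℝⁿ such that u(x) ≥ l(x) for all x ∈ Ω, with equality if and only if x = x₀. Let h : Ω → ℝ be continuous with h > 0 on Ω. Then there exists a C^∞ function ũ : Ω → ℝ such that u ≤ ũ ≤ u + h on Ω and the Hessian matrix D²ũ(x) is positive definite at every x ∈ Ω; in particular ũ is convex. -/
open Set Filter Topology

noncomputable def spsi (t : ℝ) : ℝ := ∫ s in (0:ℝ)..t, Real.smoothTransition s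

theorem spsi_hasDerivAt (t : ℝ) : HasDerivAt spsi (Real.smoothTransition t) t :=
  (Real.smoothTransition.continuous).integral_hasStrictDerivAt 0 t |>.hasDerivAt

theorem spsi_contDiff : ContDiff ℝ (⊤ : ℕ∞) spsi := by
  rw [contDiff_infty_iff_deriv]
  refine ⟨fun t => (spsi_hasDerivAt t).differentiableAt, ?_⟩
  have : deriv spsi = Real.smoothTransition := funext fun t => (spsi_hasDerivAt t).deriv
  rw [this]
  exact Real.smoothTransition.contDiff

theorem spsi_mono : Monotone spsi :=
  monotone_of_hasDerivAt_nonneg spsi_hasDerivAt (fun t => Real.smoothTransition.nonneg t)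

theorem spsi_sub_mono : Monotone (fun t => t - spsi t) :=
  monotone_of_hasDerivAt_nonneg (fun t => (hasDerivAt_id t).sub (spsi_hasDerivAt t))
    (fun t => by have := Real.smoothTransition.le_one t; simpa using this)

theorem spsi_zero : spsi 0 = 0 := by simp [spsi]

theorem spsi_nonpos {t : ℝ} (ht : t ≤ 0) : spsi t = 0 := by
  unfold spsi
  rw [intervalIntegral.integral_congr (g := fun _ => 0)]
  · simp
  · intro s hs
    rw [uIcc_of_ge ht] at hs
    exact Real.smoothTransition.zero_of_nonpos hs.2

theorem spsi_nonneg (t : ℝ) : 0 ≤ spsi t := by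
  rcases le_total t 0 with h | h
  · rw [spsi_nonpos h]
  · rw [← spsi_zero]; exact spsi_mono h

theorem spsi_le (t : ℝ) : spsi t ≤ max 0 t := by
  rcases le_total t 0 with h | h
  · rw [spsi_nonpos h]; simp
  · have := spsi_sub_mono h
    simp only [spsi_zero] at this
    exact le_max_of_le_right (by linarith)

theorem spsi_ge (t : ℝ) : t - 1 ≤ spsi t := by
  rcases le_total t 1 with h | h
  · linarith [spsi_nonneg t]
  · have h1 : spsi t = spsi 1 + (t - 1) := by
      unfold spsi
      rw [← intervalIntegral.integral_add_adjacent_intervals (b := 1)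
        (Real.smoothTransition.continuous.intervalIntegrable _ _)
        (Real.smoothTransition.continuous.intervalIntegrable _ _)]
      congr 1
      rw [intervalIntegral.integral_congr (g := fun _ => 1)]
      · simp
      · intro s hs
        rw [uIcc_of_le h] at hs
        exact Real.smoothTransition.one_of_one_le hs.1
    linarith [spsi_nonneg 1]

def SGood {n : ℕ} (f : (Fin n → ℝ) → ℝ) : Prop :=
  ContDiff ℝ (⊤ : ℕ∞) f ∧ ∀ x w : Fin n → ℝ, w ≠ 0 → ∃ (p : ℝ → ℝ) (c : ℝ),
    (∀ s, HasDerivAt (fun s : ℝ => f (x + s • w)) (p s) s) ∧ HasDerivAt p c 0 ∧ 0 < c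

theorem SGood.smax {n : ℕ} {a b : (Fin n → ℝ) → ℝ} (ha : SGood a) (hb : SGood b) {η : ℝ}
    (hη : 0 < η) : SGood (fun x => a x + η * spsi ((b x - a x) / η)) := by
  refine ⟨ha.1.add (contDiff_const.mul (spsi_contDiff.comp ((hb.1.sub ha.1).div_const η))), ?_⟩
  intro x w hw
  obtain ⟨p, c, hp, hc, hc0⟩ := ha.2 x w hw
  obtain ⟨q, d, hq, hd, hd0⟩ := hb.2 x w hw
  have hin : ∀ s, HasDerivAt (fun s : ℝ => (b (x + s • w) - a (x + s • w)) / η)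
      ((q s - p s) / η) s := fun s => ((hq s).sub (hp s)).div_const η
  set T : ℝ → ℝ := fun s => (b (x + s • w) - a (x + s • w)) / η with hT
  have hst : ∀ t, HasDerivAt Real.smoothTransition (deriv Real.smoothTransition t) t := fun t =>
    ((Real.smoothTransition.contDiff (n := 1)).differentiable (by simp) t).hasDerivAt
  have hst0 : 0 ≤ deriv Real.smoothTransition (T 0) := Real.smoothTransition.monotone.deriv_nonneg
  refine ⟨fun s => p s + Real.smoothTransition (T s) * (q s - p s),
    c + ((deriv Real.smoothTransition (T 0) * ((q 0 - p 0) / η)) * (q 0 - p 0)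
      + Real.smoothTransition (T 0) * (d - c)), ?_, ?_, ?_⟩
  · intro s
    have := (hp s).add (((spsi_hasDerivAt (T s)).comp s (hin s)).const_mul η)
    refine this.congr_deriv ?_
    field_simp
  · exact hc.add (((hst (T 0)).comp 0 (hin 0)).mul (hd.sub hc))
  · have h1 := Real.smoothTransition.nonneg (T 0)
    have h2 := Real.smoothTransition.le_one (T 0)
    have h3 : 0 ≤ (deriv Real.smoothTransition (T 0) * ((q 0 - p 0) / η)) * (q 0 - p 0) := by
      have : (deriv Real.smoothTransition (T 0) * ((q 0 - p 0) / η)) * (q 0 - p 0)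
        = deriv Real.smoothTransition (T 0) * ((q 0 - p 0) ^ 2 / η) := by ring
      rw [this]; positivity
    have h4 : 0 < c + Real.smoothTransition (T 0) * (d - c) := by
      rcases le_total c d with h | h
      · nlinarith [mul_nonneg h1 (sub_nonneg.2 h)]
      · nlinarith [mul_nonneg (sub_nonneg.2 h2) (sub_nonneg.2 h)]
    linarith

/-- The one-variable building block `sqrt (1 + t^2)`. -/
noncomputable def sq1 (t : ℝ) : ℝ := Real.sqrt (1 + t ^ 2)

theorem sq1_pos (t : ℝ) : 0 < sq1 t := Real.sqrt_pos.2 (by positivity)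
theorem sq1_sq (t : ℝ) : sq1 t ^ 2 = 1 + t ^ 2 := Real.sq_sqrt (by positivity)
theorem sq1_le (t : ℝ) : sq1 t ≤ 1 + |t| := by
  apply Real.sqrt_le_iff.2 ⟨by positivity, ?_⟩
  nlinarith [sq_abs t, abs_nonneg t]
theorem sq1_contDiff : ContDiff ℝ (⊤ : ℕ∞) sq1 :=
  ContDiff.sqrt (by fun_prop) (fun t => by positivity)
theorem sq1_hasDerivAt (t : ℝ) : HasDerivAt sq1 (t / sq1 t) t := by
  have h1 : HasDerivAt (fun t : ℝ => 1 + t ^ 2) (2 * t) t := by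
    simpa using (hasDerivAt_pow 2 t).const_add 1
  have := h1.sqrt (by positivity)
  refine HasDerivAt.congr_deriv (f := sq1) this ?_
  have := (sq1_pos t).ne'
  change 2 * t / (2 * sq1 t) = t / sq1 t
  field_simp
theorem sq1_hasDerivAt2 (t : ℝ) : HasDerivAt (fun t => t / sq1 t) (1 / sq1 t ^ 3) t := by
  have := (hasDerivAt_id t).div (sq1_hasDerivAt t) (sq1_pos t).ne'
  refine this.congr_deriv ?_
  have h0 := (sq1_pos t).ne'
  have h1 := sq1_sq t
  simp only [id]
  field_simp
  linarith

theorem SGood.basic {n : ℕ} (a c : Fin n → ℝ) (b : ℝ) {δ : ℝ} (hδ : 0 < δ) :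
    SGood (fun x => (∑ i, a i * x i) + b + δ * (1 + ∑ i, sq1 (x i - c i))) := by
  constructor
  · have : ∀ i, ContDiff ℝ (⊤ : ℕ∞) (fun x : Fin n → ℝ => sq1 (x i - c i)) := fun i =>
      sq1_contDiff.comp (by fun_prop)
    fun_prop
  intro x w hw
  have hline : ∀ i s, HasDerivAt (fun s : ℝ => (x + s • w) i) (w i) s := by
    intro i s
    simpa using ((hasDerivAt_id s).mul_const (w i)).const_add (x i)
  have hline' : ∀ i s, HasDerivAt (fun s : ℝ => (x + s • w) i - c i) (w i) s := fun i s =>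
    (hline i s).sub_const _
  refine ⟨fun s => (∑ i, a i * w i) + δ * ∑ i, (((x + s • w) i - c i) / sq1 ((x + s • w) i - c i)) * w i,
    δ * ∑ i, (1 / sq1 ((x + (0:ℝ) • w) i - c i) ^ 3 * w i) * w i, ?_, ?_, ?_⟩
  · intro s
    have h1 : HasDerivAt (fun s : ℝ => ∑ i, a i * (x + s • w) i) (∑ i, a i * w i) s :=
      HasDerivAt.fun_sum fun i _ => (hline i s).const_mul (a i)
    have h2 : HasDerivAt (fun s : ℝ => ∑ i, sq1 ((x + s • w) i - c i))
        (∑ i, (((x + s • w) i - c i) / sq1 ((x + s • w) i - c i)) * w i) s :=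
      HasDerivAt.fun_sum fun i _ => (sq1_hasDerivAt _).comp s (hline' i s)
    exact (h1.add_const b).add ((h2.const_add 1).const_mul δ)
  · have h2 : HasDerivAt (fun s : ℝ => ∑ i, (((x + s • w) i - c i) / sq1 ((x + s • w) i - c i)) * w i)
        (∑ i, (1 / sq1 ((x + (0:ℝ) • w) i - c i) ^ 3 * w i) * w i) 0 :=
      HasDerivAt.fun_sum fun i _ =>
        (((sq1_hasDerivAt2 _).comp (0:ℝ) (hline' i 0)).mul_const (w i))
    exact (h2.const_mul δ).const_add _
  · obtain ⟨j, hj⟩ := Function.ne_iff.1 hw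
    simp only [Pi.zero_apply] at hj
    apply mul_pos hδ
    apply Finset.sum_pos'
    · intro i _
      have := sq1_pos ((x + (0:ℝ) • w) i - c i)
      rw [mul_assoc]
      exact mul_nonneg (by positivity) (mul_self_nonneg _)
    · refine ⟨j, Finset.mem_univ _, ?_⟩
      have := sq1_pos ((x + (0:ℝ) • w) j - c j)
      rw [mul_assoc]
      exact mul_pos (by positivity) (mul_self_pos.2 hj)

theorem SGood.line {n : ℕ} {f : (Fin n → ℝ) → ℝ} (hf : SGood f) (x w : Fin n → ℝ) (s : ℝ) :
    HasDerivAt (fun s : ℝ => f (x + s • w)) (fderiv ℝ f (x + s • w) w) s ∧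
    HasDerivAt (fun s : ℝ => fderiv ℝ f (x + s • w) w) (fderiv ℝ (fderiv ℝ f) (x + s • w) w w) s := by
  have hl : HasDerivAt (fun s : ℝ => x + s • w) w s := by
    simpa using ((hasDerivAt_id s).smul_const w).const_add x
  have h1 : DifferentiableAt ℝ f (x + s • w) := hf.1.differentiable (by simp) _
  have h2 : DifferentiableAt ℝ (fderiv ℝ f) (x + s • w) :=
    (hf.1.fderiv_right (m := 1) (by norm_cast)).differentiable (by simp) _
  have h3 : HasDerivAt (fun s : ℝ => fderiv ℝ f (x + s • w)) (fderiv ℝ (fderiv ℝ f) (x + s • w) w) s :=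
    h2.hasFDerivAt.comp_hasDerivAt s hl
  constructor
  · exact h1.hasFDerivAt.comp_hasDerivAt s hl
  · have h4 := ((ContinuousLinearMap.apply ℝ ℝ w).hasFDerivAt
      (x := fderiv ℝ f (x + s • w))).comp_hasDerivAt s h3
    exact h4

theorem SGood.hess {n : ℕ} {f : (Fin n → ℝ) → ℝ} (hf : SGood f) (x w : Fin n → ℝ) (hw : w ≠ 0) :
    0 < fderiv ℝ (fderiv ℝ f) x w w := by
  obtain ⟨p, c, hp, hc, hc0⟩ := hf.2 x w hw
  have : p = fun s : ℝ => fderiv ℝ f (x + s • w) w :=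
    funext fun s => (hp s).unique (hf.line x w s).1
  rw [this] at hc
  have := hc.unique (hf.line x w 0).2
  simp only [zero_smul, add_zero] at this
  rwa [← this]

theorem SGood.convex {n : ℕ} {f : (Fin n → ℝ) → ℝ} (hf : SGood f) : ConvexOn ℝ univ f := by
  refine ⟨convex_univ, fun x _ y _ a b ha hb hab => ?_⟩
  have h1 : deriv (fun s : ℝ => f (x + s • (y - x))) = fun s => fderiv ℝ f (x + s • (y - x)) (y - x) :=
    funext fun s => (hf.line x (y - x) s).1.deriv
  have key : ConvexOn ℝ univ (fun s : ℝ => f (x + s • (y - x))) := by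
    apply convexOn_univ_of_deriv2_nonneg
    · exact fun s => (hf.line x (y - x) s).1.differentiableAt
    · rw [h1]
      exact fun s => (hf.line x (y - x) s).2.differentiableAt
    · intro s
      simp only [Function.iterate_succ, Function.iterate_zero, Function.comp, id]
      rw [h1, (hf.line x (y - x) s).2.deriv]
      by_cases hw : y - x = 0
      · simp [hw]
      · exact (hf.hess _ _ hw).le
  have := key.2 (mem_univ 0) (mem_univ 1) ha hb hab
  simp only [smul_eq_mul, mul_zero, mul_one, zero_add, zero_smul, add_zero, one_smul,
    add_sub_cancel] at this
  simp only [smul_eq_mul]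
  convert this using 2
  rw [← eq_sub_iff_add_eq] at hab
  subst hab
  module

theorem lin_comb {n : ℕ} (a x y : Fin n → ℝ) (s t : ℝ) :
    (∑ i, a i * (s • x + t • y) i) = s * (∑ i, a i * x i) + t * ∑ i, a i * y i := by
  rw [Finset.mul_sum, Finset.mul_sum, ← Finset.sum_add_distrib]
  refine Finset.sum_congr rfl fun i _ => ?_
  simp only [Pi.add_apply, Pi.smul_apply, smul_eq_mul]
  ring

theorem u_convex {n : ℕ} {Ω : Set (Fin n → ℝ)} (hconv : Convex ℝ Ω)
    {u : (Fin n → ℝ) → ℝ}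
    (hstrict : ∀ x₀ ∈ Ω, ∃ (a : Fin n → ℝ) (b : ℝ),
      (∀ x ∈ Ω, (∑ i, a i * x i) + b ≤ u x) ∧
      (∀ x ∈ Ω, u x = (∑ i, a i * x i) + b ↔ x = x₀)) : ConvexOn ℝ Ω u := by
  refine ⟨hconv, fun x hx y hy s t hs ht hst => ?_⟩
  have hz := hconv hx hy hs ht hst
  obtain ⟨a, b, h1, h2⟩ := hstrict _ hz
  rw [(h2 _ hz).2 rfl, lin_comb]
  have e1 := mul_le_mul_of_nonneg_left (h1 x hx) hs
  have e2 := mul_le_mul_of_nonneg_left (h1 y hy) ht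
  have e3 : b = s * b + t * b := by rw [← add_mul, hst, one_mul]
  simp only [smul_eq_mul]
  linarith

theorem bump {n : ℕ} {Ω : Set (Fin n → ℝ)} (hconv : Convex ℝ Ω)
    {u : (Fin n → ℝ) → ℝ}
    (hstrict : ∀ x₀ ∈ Ω, ∃ (a : Fin n → ℝ) (b : ℝ),
      (∀ x ∈ Ω, (∑ i, a i * x i) + b ≤ u x) ∧
      (∀ x ∈ Ω, u x = (∑ i, a i * x i) + b ↔ x = x₀))
    (ucont : ContinuousOn u Ω)
    {h : (Fin n → ℝ) → ℝ} (hcont : ContinuousOn h Ω) (hpos : ∀ x ∈ Ω, 0 < h x)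
    {W : Set (Fin n → ℝ)} (hW : IsOpen W) (hWΩ : W ⊆ Ω) {x₀ : Fin n → ℝ} (hx₀ : x₀ ∈ W) :
    ∃ g : (Fin n → ℝ) → ℝ, SGood g ∧ (∀ x ∈ Ω, x ∉ W → g x ≤ u x) ∧
      (∀ x ∈ Ω, g x ≤ u x + h x) ∧ u x₀ < g x₀ := by
  obtain ⟨a, b, hl, hleq⟩ := hstrict x₀ (hWΩ hx₀)
  obtain ⟨r, hr, hrW⟩ := Metric.nhds_basis_closedBall.mem_iff.1 (hW.mem_nhds hx₀)
  have hrΩ := hrW.trans hWΩ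
  have hlc : Continuous (fun x : Fin n → ℝ => (∑ i, a i * x i) + b) := by fun_prop
  obtain ⟨m1, hm1, hm1'⟩ := (isCompact_sphere x₀ r).exists_forall_le'
    (f := fun x => u x - ((∑ i, a i * x i) + b)) (a := 0)
    ((ucont.mono (Metric.sphere_subset_closedBall.trans hrΩ)).sub hlc.continuousOn) (by
      intro z hz
      have hzΩ := hrΩ (Metric.sphere_subset_closedBall hz)
      have h1 := hl z hzΩ
      have h2 : u z ≠ (∑ i, a i * z i) + b := by
        rw [Ne, hleq z hzΩ]
        rintro rfl
        simp at hz
        linarith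
      have := lt_of_le_of_ne h1 (Ne.symm h2)
      linarith)
  obtain ⟨m2, hm2, hm2'⟩ := (isCompact_closedBall x₀ r).exists_forall_le' (hcont.mono hrΩ)
    (a := 0) (fun z hz => hpos z (hrΩ hz))
  set Q : ℝ := 1 + n + n * r with hQ
  have hQ0 : 0 < Q := by positivity
  set δ : ℝ := min m1 m2 / Q with hδ
  have hδ0 : 0 < δ := div_pos (lt_min hm1 hm2) hQ0
  have hδQ : δ * Q = min m1 m2 := by rw [hδ]; field_simp
  have hδ1 : δ * Q ≤ m1 := hδQ ▸ min_le_left _ _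
  have hδ2 : δ * Q ≤ m2 := hδQ ▸ min_le_right _ _
  have hq : ∀ x : Fin n → ℝ, 1 + ∑ i, sq1 (x i - x₀ i) ≤ 1 + n + n * ‖x - x₀‖ := by
    intro x
    have : ∑ i, sq1 (x i - x₀ i) ≤ ∑ i : Fin n, (1 + ‖x - x₀‖) := by
      refine Finset.sum_le_sum fun i _ => (sq1_le _).trans ?_
      have := norm_le_pi_norm (x - x₀) i
      simp only [Pi.sub_apply, Real.norm_eq_abs] at this
      linarith
    simp at this
    linarith
  have hx₀Ω := hWΩ hx₀
  have hin : ∀ x ∈ Metric.closedBall x₀ r, δ * (1 + ∑ i, sq1 (x i - x₀ i)) ≤ m2 := by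
    intro x hx
    refine le_trans (mul_le_mul_of_nonneg_left ((hq x).trans ?_) hδ0.le) hδ2
    rw [Metric.mem_closedBall, dist_eq_norm] at hx
    have := mul_le_mul_of_nonneg_left hx (Nat.cast_nonneg (α := ℝ) n)
    linarith
  have hout : ∀ x ∈ Ω, x ∉ Metric.closedBall x₀ r →
      (∑ i, a i * x i) + b + δ * (1 + ∑ i, sq1 (x i - x₀ i)) ≤ u x := by
    intro x hx hxb
    rw [Metric.mem_closedBall, dist_eq_norm, not_le] at hxb
    have hρ : 0 < ‖x - x₀‖ := hr.trans hxb
    set t : ℝ := r / ‖x - x₀‖ with ht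
    have ht0 : 0 < t := div_pos hr hρ
    have ht1 : t ≤ 1 := (div_le_one hρ).2 hxb.le
    have htr : t * ‖x - x₀‖ = r := by rw [ht]; field_simp
    have hzs : (1 - t) • x₀ + t • x ∈ Metric.sphere x₀ r := by
      have : (1 - t) • x₀ + t • x - x₀ = t • (x - x₀) := by module
      rw [mem_sphere_iff_norm, this, norm_smul, Real.norm_of_nonneg ht0.le, htr]
    have e1 := hm1' _ hzs
    have e2 := (u_convex hconv hstrict).2 hx₀Ω hx (sub_nonneg.2 ht1) ht0.le (by ring)
    have e3 := (hleq x₀ hx₀Ω).2 rfl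
    simp only [lin_comb, smul_eq_mul] at e1 e2
    rw [e3] at e2
    have e4 : t * (1 + ∑ i, sq1 (x i - x₀ i)) ≤ Q := by
      have := mul_le_mul_of_nonneg_left (hq x) ht0.le
      have h5 : t * (1 + n + n * ‖x - x₀‖) = t * (1 + n) + n * r := by rw [← htr]; ring
      have h6 : t * (1 + (n : ℝ)) ≤ 1 * (1 + n) := mul_le_mul_of_nonneg_right ht1 (by positivity)
      linarith
    have e5 := mul_le_mul_of_nonneg_left e4 hδ0.le
    have e6 : t * ((∑ i, a i * x i) + b + δ * (1 + ∑ i, sq1 (x i - x₀ i))) ≤ t * u x := by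
      nlinarith
    exact le_of_mul_le_mul_left e6 ht0
  refine ⟨_, SGood.basic a x₀ b hδ0, ?_, ?_, ?_⟩
  · intro x hx hxW
    exact hout x hx (fun hh => hxW (hrW hh))
  · intro x hx
    by_cases hxb : x ∈ Metric.closedBall x₀ r
    · have := hin x hxb
      have := hm2' x hxb
      have := hl x hx
      linarith
    · have := hout x hx hxb
      have := hpos x hx
      linarith
  · rw [(hleq x₀ hx₀Ω).2 rfl]
    have : 0 ≤ ∑ i, sq1 (x₀ i - x₀ i) := Finset.sum_nonneg fun i _ => (sq1_pos _).le
    have : 0 < δ * (1 + ∑ i, sq1 (x₀ i - x₀ i)) := mul_pos hδ0 (by linarith)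
    linarith

theorem cstep {n : ℕ} {Ω : Set (Fin n → ℝ)} (hopen : IsOpen Ω) (hconv : Convex ℝ Ω)
    {u : (Fin n → ℝ) → ℝ}
    (hstrict : ∀ x₀ ∈ Ω, ∃ (a : Fin n → ℝ) (b : ℝ),
      (∀ x ∈ Ω, (∑ i, a i * x i) + b ≤ u x) ∧
      (∀ x ∈ Ω, u x = (∑ i, a i * x i) + b ↔ x = x₀))
    (ucont : ContinuousOn u Ω)
    {h : (Fin n → ℝ) → ℝ} (hcont : ContinuousOn h Ω) (hpos : ∀ x ∈ Ω, 0 < h x)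
    {W : Set (Fin n → ℝ)} (hW : IsOpen W) (hWΩ : W ⊆ Ω) {A : Set (Fin n → ℝ)}
    (hA : IsCompact A) (hAW : A ⊆ W) :
    ∀ v : (Fin n → ℝ) → ℝ, SGood v → (∀ x ∈ Ω, v x ≤ u x + h x) →
      ∃ v' : (Fin n → ℝ) → ℝ, SGood v' ∧ (∀ x ∈ Ω, v' x ≤ u x + h x) ∧
        (∀ x, v x ≤ v' x) ∧ (∀ x ∈ A, u x ≤ v' x) ∧
        (∀ x ∈ Ω, x ∉ W → u x ≤ v x → v' x = v x) := by
  refine hA.induction_on (p := fun A => ∀ v : (Fin n → ℝ) → ℝ, SGood v → (∀ x ∈ Ω, v x ≤ u x + h x) →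
      ∃ v' : (Fin n → ℝ) → ℝ, SGood v' ∧ (∀ x ∈ Ω, v' x ≤ u x + h x) ∧
        (∀ x, v x ≤ v' x) ∧ (∀ x ∈ A, u x ≤ v' x) ∧
        (∀ x ∈ Ω, x ∉ W → u x ≤ v x → v' x = v x)) ?_ ?_ ?_ ?_
  · intro v hv hvh
    exact ⟨v, hv, hvh, fun _ => le_rfl, by simp, fun _ _ _ _ => rfl⟩
  · intro s t hst ht v hv hvh
    obtain ⟨v', h1, h2, h3, h4, h5⟩ := ht v hv hvh
    exact ⟨v', h1, h2, h3, fun x hx => h4 x (hst hx), h5⟩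
  · intro s t hs ht v hv hvh
    obtain ⟨v', h1, h2, h3, h4, h5⟩ := hs v hv hvh
    obtain ⟨v'', k1, k2, k3, k4, k5⟩ := ht v' h1 h2
    refine ⟨v'', k1, k2, fun x => (h3 x).trans (k3 x), ?_, ?_⟩
    · rintro x (hx | hx)
      · exact (h4 x hx).trans (k3 x)
      · exact k4 x hx
    · intro x hx hxW hux
      rw [k5 x hx hxW (hux.trans (h3 x)), h5 x hx hxW hux]
  · intro x₀ hx₀
    obtain ⟨g, g1, g2, g3, g4⟩ := bump hconv hstrict ucont hcont hpos hW hWΩ (hAW hx₀)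
    have hΩn : Ω ∈ 𝓝 x₀ := hopen.mem_nhds (hWΩ (hAW hx₀))
    set η : ℝ := (g x₀ - u x₀) / 2 with hη
    have hη0 : 0 < η := by linarith
    have hev : ∀ᶠ x in 𝓝 x₀, u x < g x - η := by
      have c1 : ContinuousAt u x₀ := ucont.continuousAt hΩn
      have c2 : ContinuousAt (fun x => g x - η) x₀ :=
        (g1.1.continuous.sub continuous_const).continuousAt
      exact c1.eventually_lt c2 (by linarith)
    refine ⟨{x | u x < g x - η}, mem_nhdsWithin_of_mem_nhds hev, ?_⟩
    intro v hv hvh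
    refine ⟨_, hv.smax g1 hη0, ?_, ?_, ?_, ?_⟩
    · intro x hx
      have e1 := mul_le_mul_of_nonneg_left (spsi_le ((g x - v x) / η)) hη0.le
      have e2 : η * max 0 ((g x - v x) / η) = max 0 (g x - v x) := by
        rw [mul_max_of_nonneg _ _ hη0.le, mul_zero]
        congr 1
        field_simp
      have e3 : max 0 (g x - v x) ≤ u x + h x - v x :=
        max_le (by linarith [hvh x hx]) (by linarith [g3 x hx])
      linarith
    · intro x
      have := mul_nonneg hη0.le (spsi_nonneg ((g x - v x) / η))
      linarith
    · intro x hx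
      have e1 := mul_le_mul_of_nonneg_left (spsi_ge ((g x - v x) / η)) hη0.le
      have e2 : η * ((g x - v x) / η - 1) = g x - v x - η := by field_simp
      have e3 : u x < g x - η := hx
      linarith
    · intro x hx hxW hux
      have : (g x - v x) / η ≤ 0 :=
        div_nonpos_of_nonpos_of_nonneg (by linarith [g2 x hx hxW]) hη0.le
      simp [spsi_nonpos this]

theorem exhaust {n : ℕ} {Ω : Set (Fin n → ℝ)} (hopen : IsOpen Ω) :
    ∃ K : ℕ → Set (Fin n → ℝ), (∀ j, IsCompact (K j)) ∧ (∀ j, K j ⊆ interior (K (j + 1))) ∧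
      (∀ j, K j ⊆ Ω) ∧ ∀ x ∈ Ω, ∃ j, x ∈ K j := by
  have : LocallyCompactSpace Ω := hopen.locallyCompactSpace
  let K := CompactExhaustion.choice Ω
  refine ⟨fun j => Subtype.val '' K j, fun j => (K.isCompact j).image continuous_subtype_val,
    ?_, ?_, ?_⟩
  · intro j
    refine (image_mono (K.subset_interior_succ j)).trans ?_
    exact interior_maximal (image_mono interior_subset)
      (hopen.isOpenMap_subtype_val _ isOpen_interior)
  · rintro j _ ⟨y, _, rfl⟩
    exact y.2
  · intro x hx
    obtain ⟨j, hj⟩ := K.exists_mem ⟨x, hx⟩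
    exact ⟨j, _, hj, rfl⟩

/-- Proposition 3.4 of the paper: a strictly convex function `u` on an open convex set
`Ω ⊆ ℝⁿ` (in the supporting-affine-function sense) can be approximated from above, within any
continuous positive error `h`, by a `C^∞` function `ũ` with positive definite Hessian
(in particular, `ũ` is convex). -/
theorem stmt_14 (n : ℕ) (Ω : Set (Fin n → ℝ)) (hopen : IsOpen Ω) (hconv : Convex ℝ Ω)
    (u : (Fin n → ℝ) → ℝ)
    (hstrict : ∀ x₀ ∈ Ω, ∃ (a : Fin n → ℝ) (b : ℝ),
      (∀ x ∈ Ω, (∑ i, a i * x i) + b ≤ u x) ∧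
      (∀ x ∈ Ω, u x = (∑ i, a i * x i) + b ↔ x = x₀))
    (h : (Fin n → ℝ) → ℝ) (hcont : ContinuousOn h Ω) (hpos : ∀ x ∈ Ω, 0 < h x) :
    ∃ v : (Fin n → ℝ) → ℝ,
      ContDiffOn ℝ (⊤ : ℕ∞) v Ω ∧
      (∀ x ∈ Ω, u x ≤ v x ∧ v x ≤ u x + h x) ∧
      (∀ x ∈ Ω, ∀ w : Fin n → ℝ, w ≠ 0 → 0 < fderiv ℝ (fderiv ℝ v) x w w) ∧
      ConvexOn ℝ Ω v := by
  rcases Ω.eq_empty_or_nonempty with rfl | ⟨x₁, hx₁⟩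
  · exact ⟨fun _ => 0, contDiffOn_const, by simp, by simp, convexOn_const 0 hconv⟩
  have ucont : ContinuousOn u Ω := (u_convex hconv hstrict).continuousOn hopen
  obtain ⟨K, Kc, Ki, KΩ, Kex⟩ := exhaust hopen
  have Kmono : Monotone K := monotone_nat_of_le_succ fun j => (Ki j).trans interior_subset
  let P : ℕ → ((Fin n → ℝ) → ℝ) → Prop := fun j v =>
    SGood v ∧ (∀ x ∈ Ω, v x ≤ u x + h x) ∧ ∀ x ∈ K (j + 1), u x ≤ v x
  have init : ∃ v, P 0 v := by
    obtain ⟨g, g1, g2, g3, g4⟩ := bump hconv hstrict ucont hcont hpos hopen subset_rfl hx₁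
    obtain ⟨v, v1, v2, v3, v4, v5⟩ := cstep hopen hconv hstrict ucont hcont hpos hopen subset_rfl
      (Kc 1) (KΩ 1) g g1 g3
    exact ⟨v, v1, v2, v4⟩
  have step : ∀ j (v : {v // P j v}), ∃ v' : {v // P (j + 1) v}, ∀ x ∈ K j, v'.1 x = v.1 x := by
    rintro j ⟨v, h1, h2, h3⟩
    obtain ⟨v', v1, v2, v3, v4, v5⟩ := cstep hopen hconv hstrict ucont hcont hpos
      (W := Ω \ K j) (hopen.sdiff (Kc j).isClosed) sdiff_subset
      (A := K (j + 2) \ interior (K (j + 1))) ((Kc _).diff isOpen_interior)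
      (fun x hx => ⟨KΩ _ hx.1, fun hh => hx.2 (Ki j hh)⟩) v h1 h2
    refine ⟨⟨v', v1, v2, ?_⟩, ?_⟩
    · intro x hx
      by_cases hxi : x ∈ interior (K (j + 1))
      · exact (h3 x (interior_subset hxi)).trans (v3 x)
      · exact v4 x ⟨hx, hxi⟩
    · intro x hx
      exact v5 x (KΩ _ hx) (fun hh => hh.2 hx) (h3 x (Kmono (Nat.le_succ j) hx))
  choose F hF using step
  obtain ⟨v0, hv0⟩ := init
  let V : ∀ j, {v // P j v} := fun j => Nat.rec ⟨v0, hv0⟩ (fun j v => F j v) j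
  have hV : ∀ j, ∀ x ∈ K j, (V (j + 1)).1 x = (V j).1 x := fun j => hF j (V j)
  have hV' : ∀ i j, i ≤ j → ∀ x ∈ K i, (V j).1 x = (V i).1 x := by
    intro i j hij
    induction j, hij using Nat.le_induction with
    | base => exact fun _ _ => rfl
    | succ j hij ih => exact fun x hx => (hV j x (Kmono hij hx)).trans (ih x hx)
  choose! N hN using Kex
  let v : (Fin n → ℝ) → ℝ := fun x => (V (N x)).1 x
  have hv : ∀ j, ∀ x ∈ K j, v x = (V j).1 x := by
    intro j x hx
    have hxN := hN x (KΩ j hx)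
    rcases le_total (N x) j with hh | hh
    · exact (hV' _ _ hh x hxN).symm
    · exact hV' _ _ hh x hx
  have hloc : ∀ x ∈ Ω, ∃ j, v =ᶠ[𝓝 x] (V j).1 := by
    intro x hx
    refine ⟨N x + 1, ?_⟩
    have : K (N x + 1) ∈ 𝓝 x := mem_interior_iff_mem_nhds.1 (Ki _ (hN x hx))
    filter_upwards [this] with y hy using hv _ y hy
  refine ⟨v, ?_, ?_, ?_, hconv, ?_⟩
  · intro x hx
    obtain ⟨j, hj⟩ := hloc x hx
    exact ((V j).2.1.1.contDiffAt.congr_of_eventuallyEq hj).contDiffWithinAt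
  · intro x hx
    exact ⟨(V (N x)).2.2.2 x (Kmono (Nat.le_succ _) (hN x hx)), (V (N x)).2.2.1 x hx⟩
  · intro x hx w hw
    obtain ⟨j, hj⟩ := hloc x hx
    rw [hj.fderiv.fderiv_eq]
    exact (V j).2.1.hess x w hw
  · intro x hx y hy a b ha hb hab
    have hz := hconv hx hy ha hb hab
    set j := max (N x) (max (N y) (N (a • x + b • y))) with hj
    rw [hv j x (Kmono (le_max_left _ _) (hN x hx)),
      hv j y (Kmono ((le_max_left _ _).trans (le_max_right _ _)) (hN y hy)),
      hv j _ (Kmono ((le_max_right _ _).trans (le_max_right _ _)) (hN _ hz))]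
    exact (V j).2.1.convex.2 (mem_univ _) (mem_univ _) ha hb hab
end

section
/- Let n ≥ 2 and let C ⊆ ℝⁿ be an open convex set such that Σ_{k≠i} λ_k > 0 for every λ ∈ C and every i ∈ {1,…,n}. Let g : C → ℝ be concave and let ε > 0. Then the function u(λ) := −g(λ) − (ε/n)·Σ_{i=1}^n arctan(Σ_{k≠i} λ_k) is strictly convex on C, in the sense that for every x₀ ∈ C there exists an affine function l with u ≥ l on C and u(x) = l(x) if and only if x = x₀. In particular, the Hessian of λ ↦ −Σ_{i=1}^n arctan(Σ_{k≠i} λ_k) is positive definite at every point of C. -/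
/-- The function `u(λ) = −g(λ) − (ε/n)·Σᵢ arctan(Σ_{k≠i} λ_k)` of Lemma 3.6 of the paper. -/
noncomputable def stmtU (n : ℕ) (g : (Fin n → ℝ) → ℝ) (ε : ℝ) (x : Fin n → ℝ) : ℝ :=
  -g x - (ε / (n : ℝ)) * ∑ i, Real.arctan (∑ k ∈ Finset.univ.erase i, x k)

theorem arctan_tangent {s t : ℝ} (hs : 0 < s) (ht : 0 < t) (h : t ≠ s) :
    Real.arctan t < Real.arctan s + (t - s) / (1 + s ^ 2) := by
  rcases lt_or_gt_of_ne h with h | h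
  · obtain ⟨c, hc, e⟩ := exists_hasDerivAt_eq_slope Real.arctan (fun x => 1 / (1 + x ^ 2)) h
      Real.continuous_arctan.continuousOn (fun x _ => Real.hasDerivAt_arctan x)
    have h1 : 1 / (1 + s ^ 2) < 1 / (1 + c ^ 2) := by
      apply one_div_lt_one_div_of_lt (by positivity)
      have := hc.1; have := hc.2; nlinarith
    rw [e, lt_div_iff₀ (by linarith)] at h1
    have : (t - s) / (1 + s ^ 2) = - (1 / (1 + s ^ 2) * (s - t)) := by ring
    linarith
  · obtain ⟨c, hc, e⟩ := exists_hasDerivAt_eq_slope Real.arctan (fun x => 1 / (1 + x ^ 2)) h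
      Real.continuous_arctan.continuousOn (fun x _ => Real.hasDerivAt_arctan x)
    have h1 : 1 / (1 + c ^ 2) < 1 / (1 + s ^ 2) := by
      apply one_div_lt_one_div_of_lt (by positivity)
      have := hc.1; have := hc.2; nlinarith
    rw [e, div_lt_iff₀ (by linarith)] at h1
    have : (t - s) / (1 + s ^ 2) = (1 / (1 + s ^ 2) * (t - s)) := by ring
    linarith

theorem partial_sums_inj {n : ℕ} (hn : 2 ≤ n) (w : Fin n → ℝ)
    (h : ∀ i, ∑ k ∈ Finset.univ.erase i, w k = 0) : w = 0 := by
  have h1 : ∀ i, w i = ∑ k, w k := fun i => by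
    rw [← Finset.add_sum_erase _ _ (Finset.mem_univ i), h i, add_zero]
  have h2 : ∑ k, w k = n * ∑ k, w k := by
    conv_lhs => rw [Finset.sum_congr rfl (fun i _ => h1 i)]
    simp
  have h3 : ∑ k, w k = 0 := by
    have : (2 : ℝ) ≤ n := by exact_mod_cast hn
    have h4 : ((n : ℝ) - 1) * ∑ k, w k = 0 := by linarith
    rcases mul_eq_zero.1 h4 with h5 | h5
    · linarith
    · exact h5
  funext i
  rw [h1 i, h3]; rfl

theorem supergrad {n : ℕ} (C : Set (Fin n → ℝ))
    (hopen : IsOpen C) (g : (Fin n → ℝ) → ℝ) (hconc : ConcaveOn ℝ C g)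
    (x₀ : Fin n → ℝ) (hx₀ : x₀ ∈ C) :
    ∃ f : (Fin n → ℝ) →ₗ[ℝ] ℝ, ∀ x ∈ C, g x ≤ g x₀ + f (x - x₀) := by
  have hc : ContinuousOn g C := hconc.continuousOn hopen
  have ho : IsOpen {p : (Fin n → ℝ) × ℝ | p.1 ∈ C ∧ p.2 < g p.1} := by
    have h1 : IsOpen (C ×ˢ (Set.univ : Set ℝ)) := hopen.prod isOpen_univ
    have h2 : ContinuousOn (fun p : (Fin n → ℝ) × ℝ => g p.1 - p.2) (C ×ˢ Set.univ) :=
      (hc.comp continuousOn_fst (fun p hp => hp.1)).sub continuousOn_snd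
    convert h2.isOpen_inter_preimage h1 (isOpen_Ioi (a := (0 : ℝ))) using 1
    ext p; simp
  obtain ⟨F, hF⟩ := geometric_hahn_banach_open_point hconc.convex_strict_hypograph ho
    (x := (x₀, g x₀)) (by simp)
  have hd : ∀ x t, F (x, t) = F (x, 0) + t * F (0, 1) := fun x t => by
    have : ((x, t) : (Fin n → ℝ) × ℝ) = (x, 0) + t • (0, 1) := by simp
    rw [this, map_add, map_smul, smul_eq_mul]
  have hpos : 0 < F (0, 1) := by
    have := hF (x₀, g x₀ - 1) ⟨hx₀, by simp⟩
    rw [hd, hd x₀ (g x₀)] at this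
    linarith
  refine ⟨-(F (0, 1))⁻¹ • (F.toLinearMap ∘ₗ LinearMap.inl ℝ _ _), fun x hx => ?_⟩
  have key : F (x, 0) + g x * F (0, 1) ≤ F (x₀, 0) + g x₀ * F (0, 1) := by
    refine le_of_forall_pos_lt_add fun δ hδ => ?_
    have := hF (x, g x - δ / F (0, 1)) ⟨hx, by simp; positivity⟩
    rw [hd, hd x₀ (g x₀), sub_mul, div_mul_cancel₀ _ hpos.ne'] at this
    linarith
  have e : F (x - x₀, 0) = F (x, 0) - F (x₀, 0) := by
    rw [← map_sub]; simp
  have e2 : (-(F (0, 1))⁻¹ • (F.toLinearMap ∘ₗ LinearMap.inl ℝ (Fin n → ℝ) ℝ)) (x - x₀)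
      = -((F (0, 1))⁻¹ * (F (x, 0) - F (x₀, 0))) := by
    simp [e]
  rw [e2, ← sub_nonneg]
  have : g x₀ + -((F (0, 1))⁻¹ * (F (x, 0) - F (x₀, 0))) - g x
    = (F (0, 1))⁻¹ * (F (x₀, 0) + g x₀ * F (0, 1) - (F (x, 0) + g x * F (0, 1))) := by
    field_simp; ring
  rw [this]
  exact mul_nonneg (by positivity) (by linarith)

/-- The linear form given by the sum of the coordinates other than `i`. -/
noncomputable def TT {n : ℕ} (i : Fin n) : (Fin n → ℝ) →L[ℝ] ℝ :=
  ∑ k ∈ Finset.univ.erase i, ContinuousLinearMap.proj k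

theorem TT_apply {n : ℕ} (i : Fin n) (x : Fin n → ℝ) :
    TT i x = ∑ k ∈ Finset.univ.erase i, x k := by
  simp [TT]

theorem hess {n : ℕ} (x w : Fin n → ℝ) :
    fderiv ℝ (fderiv ℝ (fun y : Fin n → ℝ => -∑ i, Real.arctan (TT i y))) x w w
      = ∑ i, 2 * TT i x / (1 + (TT i x) ^ 2) ^ 2 * (TT i w) ^ 2 := by
  have h1 : fderiv ℝ (fun y : Fin n → ℝ => -∑ i, Real.arctan (TT i y))
      = fun y => -∑ i, (1 / (1 + (TT i y) ^ 2)) • (TT i) := by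
    funext y
    exact (HasFDerivAt.fun_sum fun i _ => (TT i).hasFDerivAt.arctan).neg.fderiv
  rw [h1]
  have h2 : ∀ i : Fin n, HasFDerivAt (fun y : Fin n → ℝ => (1 / (1 + (TT i y) ^ 2)) • (TT i))
      (((-(2 * TT i x) / (1 + (TT i x) ^ 2) ^ 2) • TT i).smulRight (TT i)) x := fun i => by
    have h3 : HasDerivAt (fun s : ℝ => 1 / (1 + s ^ 2))
        (-(2 * TT i x) / (1 + (TT i x) ^ 2) ^ 2) (TT i x) := by
      have := (((hasDerivAt_id (TT i x)).pow 2).const_add 1).inv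
        (by simp; positivity)
      convert this using 1
      · rfl
      · rfl
      · funext s; simp [one_div]
      · simp
    exact (h3.comp_hasFDerivAt x (TT i).hasFDerivAt).smul_const (TT i)
  rw [((HasFDerivAt.fun_sum fun i (_ : i ∈ Finset.univ) => h2 i).fun_neg).fderiv]
  simp only [ContinuousLinearMap.neg_apply, ContinuousLinearMap.sum_apply,
    ContinuousLinearMap.smulRight_apply, ContinuousLinearMap.smul_apply, smul_eq_mul,
    ← Finset.sum_neg_distrib]
  exact Finset.sum_congr rfl fun i _ => by ring

/-- Lemma 3.6 of the paper: if `g` is concave on an open convex set `C ⊆ ℝⁿ` (`n ≥ 2`) on which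
all the partial sums `Σ_{k≠i} λ_k` are positive, then for any `ε > 0` the function
`u(λ) = −g(λ) − (ε/n)·Σᵢ arctan(Σ_{k≠i} λ_k)` is strictly convex on `C` in the
supporting-affine-function sense; in particular, the Hessian of
`λ ↦ −Σᵢ arctan(Σ_{k≠i} λ_k)` is positive definite at every point of `C`. -/
theorem stmt_15 (n : ℕ) (hn : 2 ≤ n) (C : Set (Fin n → ℝ))
    (hopen : IsOpen C) (hconv : Convex ℝ C)
    (hpos : ∀ x ∈ C, ∀ i : Fin n, 0 < ∑ k ∈ Finset.univ.erase i, x k)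
    (g : (Fin n → ℝ) → ℝ) (hconc : ConcaveOn ℝ C g)
    (ε : ℝ) (hε : 0 < ε) :
    (∀ x₀ ∈ C, ∃ (a : Fin n → ℝ) (b : ℝ),
      (∀ x ∈ C, (∑ i, a i * x i) + b ≤ stmtU n g ε x) ∧
      (∀ x ∈ C, stmtU n g ε x = (∑ i, a i * x i) + b ↔ x = x₀)) ∧
    (∀ x ∈ C, ∀ w : Fin n → ℝ, w ≠ 0 →
      0 < fderiv ℝ (fderiv ℝ (fun y : Fin n → ℝ =>
        -∑ i, Real.arctan (∑ k ∈ Finset.univ.erase i, y k))) x w w) := by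
  have hinj : ∀ w : Fin n → ℝ, w ≠ 0 → ∃ i, TT i w ≠ 0 := fun w hw => by
    by_contra! h
    exact hw (partial_sums_inj hn w fun i => by rw [← TT_apply, h])
  have hn0 : (0 : ℝ) < n := by exact_mod_cast (by omega : 0 < n)
  unfold stmtU
  simp only [← TT_apply] at hpos ⊢
  constructor
  · intro x₀ hx₀
    obtain ⟨f, hf⟩ := supergrad C hopen g hconc x₀ hx₀
    let L : (Fin n → ℝ) →ₗ[ℝ] ℝ :=
      -f - (ε / n) • ∑ i, (1 / (1 + (TT i x₀) ^ 2)) • (TT i).toLinearMap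
    have hL : ∀ x, L (x - x₀) =
        -f (x - x₀) - (ε / n) * ∑ i, (TT i x - TT i x₀) / (1 + (TT i x₀) ^ 2) := fun x => by
      simp only [L, LinearMap.sub_apply, LinearMap.neg_apply, LinearMap.smul_apply,
        LinearMap.sum_apply, smul_eq_mul, ContinuousLinearMap.coe_coe, map_sub (TT _)]
      congr 2
      exact Finset.sum_congr rfl fun i _ => by ring
    have hsum : ∀ x : Fin n → ℝ, ∑ i, L (Pi.single i 1) * x i = L x := fun x => by
      conv_rhs => rw [← Finset.univ_sum_single x, map_sum]
      refine Finset.sum_congr rfl fun i _ => ?_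
      have : Pi.single i (x i) = x i • (Pi.single i 1 : Fin n → ℝ) := by
        rw [← Pi.single_smul]; simp
      rw [this, map_smul, smul_eq_mul, mul_comm]
    set u : (Fin n → ℝ) → ℝ := fun x => -g x - ε / n * ∑ i, Real.arctan (TT i x) with hu
    have hlt : ∀ x ∈ C, x ≠ x₀ → L x + (u x₀ - L x₀) < u x := fun x hx hne => by
      have h1 := hf x hx
      have h2 := hL x
      rw [map_sub] at h2
      have h3 : ∑ i, Real.arctan (TT i x) <
          ∑ i, (Real.arctan (TT i x₀) + (TT i x - TT i x₀) / (1 + (TT i x₀) ^ 2)) := by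
        obtain ⟨j, hj⟩ := hinj (x - x₀) (sub_ne_zero.2 hne)
        rw [map_sub, sub_ne_zero] at hj
        refine Finset.sum_lt_sum (fun i _ => ?_)
          ⟨j, Finset.mem_univ _, arctan_tangent (hpos x₀ hx₀ j) (hpos x hx j) hj⟩
        by_cases h : TT i x = TT i x₀
        · simp [h]
        · exact (arctan_tangent (hpos x₀ hx₀ i) (hpos x hx i) h).le
      rw [Finset.sum_add_distrib] at h3
      have h4 := mul_lt_mul_of_pos_left h3 (div_pos hε hn0)
      simp only [hu]
      linarith
    refine ⟨fun i => L (Pi.single i 1), u x₀ - L x₀, fun x hx => ?_, fun x hx => ?_⟩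
    · rw [hsum]
      by_cases h : x = x₀
      · subst h; simp [hu]
      · exact (hlt x hx h).le
    · rw [hsum]
      constructor
      · intro h
        by_contra hne
        exact (hlt x hx hne).ne' h
      · rintro rfl; simp [hu]
  · intro x hx w hw
    rw [hess]
    obtain ⟨j, hj⟩ := hinj w hw
    refine Finset.sum_pos' (fun i _ => ?_) ⟨j, Finset.mem_univ _, ?_⟩
    · have := hpos x hx i; positivity
    · have := hpos x hx j; positivity
end

section
/- Let Γ_∞ ⊆ ℝⁿ be an open convex cone, invariant under permutations of the coordinates, containing the open positive orthant Γₙ := {λ : λᵢ > 0 for all i}, and satisfying Σ_{k≠i} λ_k > 0 for every λ ∈ Γ_∞ and every i. Let F : Γ_∞ → ℝ be concave, invariant under permutations of the coordinates, monotone nondecreasing in each variable, strictly positive, and such that F(Rλ) → +∞ as R → +∞ for every λ ∈ Γ_∞. Then for every ε ∈ (0, 1/2) there exists a function g : Γ_∞ → ℝ such that: (1) g is C^∞ on Γ_∞ and invariant under permutations of the coordinates; (2) (1−ε)·F(λ) ≤ g(λ) ≤ F(λ) + (π/2)·ε for all λ ∈ Γ_∞; (3) g is concave, ∂g/∂λᵢ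 > 0 on Γ_∞ for every i, and g(Rλ) → +∞ as R → +∞ for every λ ∈ Γ_∞. -/
open MeasureTheory Filter Topology

theorem aux_kernel (n : ℕ) : ∃ φ : (Fin n → ℝ) → ℝ, ContDiff ℝ (⊤ : ℕ∞) φ ∧ (∀ y, 0 ≤ φ y) ∧
    (∫ y, φ y = 1) ∧ (∀ y, φ y ≠ 0 → ∀ i, 1/2 ≤ y i ∧ y i ≤ 1) ∧
    (∀ (σ : Equiv.Perm (Fin n)) y, φ (fun i => y (σ i)) = φ y) := by
  let b : ContDiffBump (3/4 : ℝ) := ⟨1/8, 1/4, by norm_num, by norm_num⟩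
  refine ⟨fun y => ∏ i, b.normed volume (y i), ?_, ?_, ?_, ?_, ?_⟩
  · apply contDiff_prod
    intro i _
    exact b.contDiff_normed.comp (contDiff_apply ℝ ℝ i)
  · intro y
    exact Finset.prod_nonneg fun i _ => b.nonneg_normed _
  · rw [integral_fintype_prod_volume_eq_prod (fun (_ : Fin n) x => b.normed volume x)]
    simp [b.integral_normed]
  · intro y hy i
    have h1 := Finset.prod_ne_zero_iff.1 hy i (Finset.mem_univ i)
    have h2 : y i ∈ Function.support (b.normed volume) := h1
    rw [b.support_normed_eq, Metric.mem_ball, Real.dist_eq, abs_lt] at h2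
    have : b.rOut = 1/4 := rfl
    constructor <;> linarith [h2.1, h2.2]
  · intro σ y
    exact Equiv.prod_comp σ (fun i => b.normed volume (y i))

theorem aux_smooth (n : ℕ) (f φ : (Fin n → ℝ) → ℝ) (hf : LocallyIntegrable f volume)
    (hφ : ContDiff ℝ (⊤ : ℕ∞) φ) (hs : ∀ y, φ y ≠ 0 → ‖y‖ ≤ 1) :
    ContDiffOn ℝ (⊤ : ℕ∞) (fun q : (Fin n → ℝ) × ℝ => ∫ y, f (q.1 + q.2 • y) * φ y)
      {q | 0 < q.2} := by
  rintro ⟨x0, t0⟩ h0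
  have h0 : 0 < t0 := h0
  apply ContDiffAt.contDiffWithinAt
  let g : ℝ → (Fin n → ℝ) → ℝ := fun t z => (t⁻¹) ^ n * φ (t⁻¹ • (-z))
  have key := contDiffOn_convolution_right_with_param (𝕜 := ℝ) (n := ⊤) (μ := (volume : Measure (Fin n → ℝ))) (f := f)
    (ContinuousLinearMap.mul ℝ ℝ) (g := g) (s := Set.Ioo 0 (t0 + 1))
    (k := Metric.closedBall 0 (t0 + 1)) isOpen_Ioo (isCompact_closedBall _ _) ?_ hf ?_
  · have h2 : ContDiffAt ℝ (⊤ : ℕ∞) (fun q : ℝ × (Fin n → ℝ) =>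
      convolution f (g q.1) (ContinuousLinearMap.mul ℝ ℝ) volume q.2) (t0, x0) := by
      apply key.contDiffAt
      exact (isOpen_Ioo.prod isOpen_univ).mem_nhds ⟨⟨h0, by simp⟩, trivial⟩
    have h3 := ContDiffAt.comp (x0, t0) (f := fun q : (Fin n → ℝ) × ℝ => (q.2, q.1)) h2
      (contDiffAt_snd.prodMk contDiffAt_fst)
    refine h3.congr_of_eventuallyEq ?_
    have : ∀ᶠ q : (Fin n → ℝ) × ℝ in 𝓝 (x0, t0), 0 < q.2 :=
      continuousAt_snd.eventually (lt_mem_nhds h0)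
    filter_upwards [this] with q hq
    simp only [Function.comp, convolution, ContinuousLinearMap.mul_apply', g]
    have e1 : ∀ w, f w * ((q.2⁻¹) ^ n * φ (q.2⁻¹ • (-(q.1 - w)))) =
      (fun z => (q.2⁻¹) ^ n * (f (q.1 + z) * φ (q.2⁻¹ • z))) (-q.1 + w) := by
      intro w
      simp only [add_neg_cancel_left]
      rw [show -(q.1 - w) = -q.1 + w by abel]
      ring
    simp_rw [e1]
    rw [integral_add_left_eq_self (fun z => (q.2⁻¹) ^ n * (f (q.1 + z) * φ (q.2⁻¹ • z)))]
    have e2 := Measure.integral_comp_smul (volume : Measure (Fin n → ℝ))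
      (fun z => (f (q.1 + z) * φ (q.2⁻¹ • z))) q.2
    simp only [inv_smul_smul₀ hq.ne'] at e2
    rw [e2, integral_const_mul]
    simp only [Module.finrank_fin_fun, smul_eq_mul]
    rw [abs_of_pos (by positivity), inv_pow]
  · intro t z ht hz
    have : φ (t⁻¹ • (-z)) = 0 := by
      by_contra h
      have h1 := hs _ h
      rw [norm_smul, norm_neg, norm_inv, Real.norm_of_nonneg ht.1.le] at h1
      apply hz
      rw [mem_closedBall_zero_iff]
      have := (inv_mul_le_iff₀ ht.1).1 h1
      linarith [ht.2]
    simp only [g, this, mul_zero]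
  · have hi : ContDiffOn ℝ (⊤ : ℕ∞) (fun q : ℝ × (Fin n → ℝ) => q.1⁻¹) (Set.Ioo 0 (t0+1) ×ˢ Set.univ) :=
      ContDiffOn.inv contDiffOn_fst (fun q hq => hq.1.1.ne')
    exact (hi.pow n).mul (hφ.comp_contDiffOn (hi.smul contDiffOn_snd.neg))

theorem aux_dist (n : ℕ) (hn : 0 < n) (S : Set (Fin n → ℝ))
    (hopen : IsOpen S)
    (hadd : ∀ x ∈ S, ∀ y ∈ S, x + y ∈ S)
    (hcone : ∀ x ∈ S, ∀ t : ℝ, 0 < t → t • x ∈ S)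
    (hperm : ∀ x ∈ S, ∀ σ : Equiv.Perm (Fin n), (fun i => x (σ i)) ∈ S)
    (hup : ∀ x ∈ S, ∀ y, (∀ i, x i ≤ y i) → y ∈ S)
    (hone : (1 : Fin n → ℝ) ∈ S)
    (hsum : ∀ x ∈ S, 0 < ∑ k, x k) :
    ∃ d : (Fin n → ℝ) → ℝ, (∀ x y, d x + d y ≤ d (x + y)) ∧ (∀ x t, 0 < t → t * d x ≤ d (t • x)) ∧
      (∀ x y, (∀ i, x i ≤ y i) → d x ≤ d y) ∧ (∀ c, d (c • 1) = c) ∧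
      (∀ x (σ : Equiv.Perm (Fin n)), d (fun i => x (σ i)) = d x) ∧
      (∀ x t, t < d x → x - t • (1 : Fin n → ℝ) ∈ S) ∧ (∀ x ∈ S, 0 < d x) := by
  have hn' : (0:ℝ) < n := by exact_mod_cast hn
  let A : (Fin n → ℝ) → Set ℝ := fun x => {t | x - t • (1 : Fin n → ℝ) ∈ S}
  have hbd : ∀ x, BddAbove (A x) := by
    intro x
    refine ⟨(∑ k, x k) / n, fun t ht => ?_⟩
    have := hsum _ ht
    simp [Finset.sum_sub_distrib] at this
    rw [le_div_iff₀ hn']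
    linarith
  have hne : ∀ x, (A x).Nonempty := by
    intro x
    refine ⟨-(‖x‖ + 1), ?_⟩
    refine hup 1 hone _ fun i => ?_
    have := (abs_le.1 (norm_le_pi_norm x i)).1
    simp
    linarith
  have hdown : ∀ x s t, s ∈ A x → t ≤ s → t ∈ A x := by
    intro x s t hs hts
    refine hup _ hs _ fun i => ?_
    simp only [Pi.sub_apply, Pi.smul_apply, Pi.one_apply, smul_eq_mul]
    linarith
  let d : (Fin n → ℝ) → ℝ := fun x => sSup (A x)
  have hlt : ∀ x t, t < d x → t ∈ A x := by
    intro x t ht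
    obtain ⟨s, hs, hts⟩ := exists_lt_of_lt_csSup (hne x) ht
    exact hdown x s t hs hts.le
  have hle : ∀ x t, t ∈ A x → t ≤ d x := fun x t ht => le_csSup (hbd x) ht
  have hscale : ∀ x t, 0 < t → t * d x ≤ d (t • x) := by
    intro x t ht
    apply le_of_forall_lt_imp_le_of_dense
    intro c hc
    have h1 := hlt x (c / t) (by rw [div_lt_iff₀ ht]; linarith)
    apply hle
    show _ ∈ S
    convert hcone _ h1 t ht using 1
    rw [smul_sub, smul_smul, mul_div_cancel₀ _ ht.ne']
  refine ⟨d, ?_, hscale, ?_, ?_, ?_, hlt, ?_⟩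
  · intro x y
    apply le_of_forall_pos_le_add
    intro e he
    have h1 := hlt x (d x - e/2) (by linarith)
    have h2 := hlt y (d y - e/2) (by linarith)
    have := hle (x + y) (d x - e/2 + (d y - e/2)) (by
      have := hadd _ h1 _ h2
      show _ ∈ S
      convert this using 1
      module)
    linarith
  · intro x y hxy
    apply le_of_forall_pos_le_add
    intro e he
    have h1 := hlt x (d x - e) (by linarith)
    have := hle y (d x - e) (hup _ h1 _ fun i => by
      have := hxy i
      simp only [Pi.sub_apply, Pi.smul_apply, Pi.one_apply, smul_eq_mul]
      linarith)
    linarith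
  · intro c
    apply le_antisymm
    · by_contra! h
      have h1 := hsum _ (hlt _ _ h)
      simp at h1
    · apply le_of_forall_pos_le_add
      intro e he
      have := hle (c • 1) (c - e) (by
        show _ ∈ S
        convert hcone _ hone e he using 1
        module)
      linarith
  · have : ∀ x (σ : Equiv.Perm (Fin n)), A x ⊆ A (fun i => x (σ i)) := by
      intro x σ t ht
      exact hperm _ ht σ
    intro x σ
    show sSup _ = sSup _
    congr 1
    apply subset_antisymm _ (this x σ)
    have := this (fun i => x (σ i)) σ⁻¹
    simpa using this
  · intro x hx
    have hc : Continuous (fun t : ℝ => x - t • (1 : Fin n → ℝ)) := by fun_prop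
    have h0 : ∀ᶠ t : ℝ in 𝓝 0, x - t • (1 : Fin n → ℝ) ∈ S :=
      hc.continuousAt.eventually (by simpa using hopen.mem_nhds hx)
    have h1 : ∀ᶠ t : ℝ in 𝓝[>] 0, x - t • (1 : Fin n → ℝ) ∈ S ∧ 0 < t :=
      (h0.filter_mono nhdsWithin_le_nhds).and self_mem_nhdsWithin
    obtain ⟨t, ht, ht0⟩ := h1.exists
    exact ht0.trans_le (hle x t ht)

theorem aux_perm_s16 (n : ℕ) (G : (Fin n → ℝ) → ℝ) (σ : Equiv.Perm (Fin n)) :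
    ∫ y : Fin n → ℝ, G (fun i => y (σ i)) = ∫ y, G y := by
  have h := volume_measurePreserving_piCongrLeft (fun _ : Fin n => ℝ) σ⁻¹
  rw [← h.integral_comp' G]
  congr 1
  ext y
  congr 1
  ext i
  have := MeasurableEquiv.piCongrLeft_apply_apply (β := fun _ : Fin n => ℝ) σ⁻¹ y (σ i)
  simpa using this.symm

theorem aux_int (n : ℕ) (a φ : (Fin n → ℝ) → ℝ) (hφ : Continuous φ)
    (hs : ∀ y, φ y ≠ 0 → ∀ i, 1/2 ≤ y i ∧ y i ≤ 1)
    (ha : ContinuousOn a (Set.Icc 0 1)) : Integrable (fun y => a y * φ y) := by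
  have h1 : IntegrableOn (fun y => a y * φ y) (Set.Icc 0 1) :=
    (ha.mul hφ.continuousOn).integrableOn_compact isCompact_Icc
  refine (integrableOn_iff_integrable_of_support_subset ?_).1 h1
  intro y hy
  have := hs y (right_ne_zero_of_mul hy)
  exact ⟨fun i => by have := (this i).1; simp; linarith, fun i => (this i).2⟩

theorem aux_mono_s16 (n : ℕ) (a b φ : (Fin n → ℝ) → ℝ) (hφ : Continuous φ) (hφ0 : ∀ y, 0 ≤ φ y)
    (hs : ∀ y, φ y ≠ 0 → ∀ i, 1/2 ≤ y i ∧ y i ≤ 1)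
    (ha : ContinuousOn a (Set.Icc 0 1)) (hb : ContinuousOn b (Set.Icc 0 1))
    (hab : ∀ y, (∀ i, 1/2 ≤ y i ∧ y i ≤ 1) → a y ≤ b y) :
    ∫ y, a y * φ y ≤ ∫ y, b y * φ y := by
  refine integral_mono (aux_int n a φ hφ hs ha) (aux_int n b φ hφ hs hb) fun y => ?_
  by_cases h : φ y = 0
  · simp [h]
  · exact mul_le_mul_of_nonneg_right (hab y (hs y h)) (hφ0 y)

theorem aux_norm (n : ℕ) (y : Fin n → ℝ) (h : ∀ i, 1/2 ≤ y i ∧ y i ≤ 1) : ‖y‖ ≤ 1 := by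
  rw [pi_norm_le_iff_of_nonneg zero_le_one]
  intro i
  rw [Real.norm_eq_abs, abs_le]
  constructor <;> linarith [(h i).1, (h i).2]

theorem aux_implicit {E : Type*} [NormedAddCommGroup E] [NormedSpace ℝ E] [CompleteSpace E]
    (Φ : E × ℝ → ℝ) (δ : E → ℝ) (x : E) (hΦ : ContDiffAt ℝ (⊤ : ℕ∞) Φ (x, δ x))
    (hdec : ∀ y s t, 0 < s → s < t → Φ (y, t) + (t - s) / 2 ≤ Φ (y, s))
    (hx : 0 < δ x)
    (hδ : ∀ᶠ y in 𝓝 x, 0 < δ y ∧ Φ (y, δ y) = 0) : ContDiffAt ℝ (⊤ : ℕ∞) δ x := by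
  have hd : DifferentiableAt ℝ Φ (x, δ x) := hΦ.differentiableAt (by simp)
  have hder : HasDerivAt (fun t => Φ (x, t)) (fderiv ℝ Φ (x, δ x) (0, 1)) (δ x) := by
    have := HasFDerivAt.comp_hasDerivAt (δ x) hd.hasFDerivAt
      ((hasDerivAt_const (δ x) x).prodMk (hasDerivAt_id (δ x)))
    exact this
  have hneg : fderiv ℝ Φ (x, δ x) (0, 1) ≤ -1/2 := by
    have h2 : HasDerivAt (fun t => Φ (x, t) + t / 2) (fderiv ℝ Φ (x, δ x) (0, 1) + 1 / 2) (δ x) :=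
      hder.add ((hasDerivAt_id _).div_const 2)
    have h3 : AntitoneOn (fun t => Φ (x, t) + t / 2) (Set.Ioi 0) := by
      intro s hs t ht hst
      rcases hst.eq_or_lt with rfl | hlt
      · exact le_rfl
      · have := hdec x s t hs hlt
        simp only
        linarith
    have h4 := h3.derivWithin_nonpos (x := δ x)
    rw [h2.hasDerivWithinAt.derivWithin (isOpen_Ioi.uniqueDiffWithinAt hx)] at h4
    linarith
  have hinv : (fderiv ℝ Φ (x, δ x) ∘L .inr ℝ E ℝ).IsInvertible := by
    refine ⟨ContinuousLinearEquiv.unitsEquivAut ℝ (Units.mk0 (fderiv ℝ Φ (x, δ x) (0, 1)) (by linarith)), ?_⟩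
    ext
    simp
  have hne : ((⊤ : ℕ∞) : WithTop ℕ∞) ≠ 0 := by simp
  have h1 := hΦ.contDiffAt_implicitFunction hne hinv
  refine h1.congr_of_eventuallyEq ?_
  have h5 := hΦ.eventually_apply_implicitFunction hne hinv
  have h6 := hΦ.implicitFunction_apply_self hne hinv
  have h7 : ∀ᶠ y in 𝓝 x, 0 < hΦ.implicitFunction hne hinv y := by
    apply h1.continuousAt.eventually (lt_mem_nhds _)
    simp only at h6
    rwa [h6]
  filter_upwards [hδ, h5, h7] with y hy h5 h7
  rw [hδ.self_of_nhds.2] at h5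
  rcases lt_trichotomy (δ y) (hΦ.implicitFunction hne hinv y) with h | h | h
  · have := hdec y _ _ hy.1 h
    linarith
  · exact h
  · have := hdec y _ _ h7 h
    linarith

theorem aux_delta (n : ℕ) (S : Set (Fin n → ℝ)) (hopen : IsOpen S)
    (hperm : ∀ x ∈ S, ∀ σ : Equiv.Perm (Fin n), (fun i => x (σ i)) ∈ S)
    (hup : ∀ x ∈ S, ∀ y, (∀ i, x i ≤ y i) → y ∈ S)
    (hconv : Convex ℝ S)
    (φ : (Fin n → ℝ) → ℝ) (hφ : ContDiff ℝ (⊤ : ℕ∞) φ) (hφ0 : ∀ y, 0 ≤ φ y)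
    (hφ1 : ∫ y, φ y = 1) (hs : ∀ y, φ y ≠ 0 → ∀ i, 1/2 ≤ y i ∧ y i ≤ 1)
    (hφp : ∀ (σ : Equiv.Perm (Fin n)) y, φ (fun i => y (σ i)) = φ y)
    (d : (Fin n → ℝ) → ℝ) (hd1 : ∀ x y, d x + d y ≤ d (x + y))
    (hd2 : ∀ x t, 0 < t → t * d x ≤ d (t • x))
    (hd3 : ∀ x y, (∀ i, x i ≤ y i) → d x ≤ d y) (hd4 : ∀ c : ℝ, d (c • 1) = c)
    (hd5 : ∀ x (σ : Equiv.Perm (Fin n)), d (fun i => x (σ i)) = d x)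
    (hd6 : ∀ x t, t < d x → x - t • (1 : Fin n → ℝ) ∈ S) (hd7 : ∀ x ∈ S, 0 < d x) :
    ∃ δ : (Fin n → ℝ) → ℝ, ContDiffOn ℝ (⊤ : ℕ∞) δ S ∧ (∀ x ∈ S, 0 < δ x) ∧
      (∀ x ∈ S, x - (δ x / 4) • (1 : Fin n → ℝ) ∈ S) ∧
      (∀ x ∈ S, ∀ σ : Equiv.Perm (Fin n), δ (fun i => x (σ i)) = δ x) ∧
      (∀ x ∈ S, ∀ y, (∀ i, x i ≤ y i) → δ x ≤ δ y) ∧ ConcaveOn ℝ S δ := by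
  have hdconc : ConcaveOn ℝ Set.univ d := by
    refine ⟨convex_univ, fun x _ y _ a b ha hb hab => ?_⟩
    have h0 : ∀ x t, 0 ≤ t → t * d x ≤ d (t • x) := by
      intro x t ht
      rcases ht.eq_or_lt with rfl | ht
      · have := hd4 0
        simp at this
        simp [this]
      · exact hd2 x t ht
    exact (add_le_add (h0 x a ha) (h0 y b hb)).trans (hd1 _ _)
  have hdc : Continuous d := by
    have := hdconc.continuousOn isOpen_univ
    exact continuousOn_univ.1 this
  let Φ : (Fin n → ℝ) × ℝ → ℝ := fun q => ∫ y, d (q.1 - q.2 • y) * φ y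
  have hΦs : ContDiffOn ℝ (⊤ : ℕ∞) Φ {q | 0 < q.2} := by
    have := aux_smooth n d (fun y => φ (-y)) hdc.locallyIntegrable (hφ.comp contDiff_neg) (by
      intro y hy
      rw [← norm_neg]
      exact aux_norm n _ (hs _ hy))
    refine this.congr fun q _ => ?_
    show ∫ y, d (q.1 - q.2 • y) * φ y = _
    rw [← integral_neg_eq_self]
    simp
  have hopen' : IsOpen {q : (Fin n → ℝ) × ℝ | 0 < q.2} := isOpen_lt continuous_const continuous_snd
  have hcont : ∀ x (t : ℝ), ContinuousOn (fun y => d (x - t • y)) (Set.Icc 0 1) := by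
    intro x t
    apply Continuous.continuousOn
    fun_prop
  have hcst : ∀ c : ℝ, ∫ y, c * φ y = c := by
    intro c
    rw [integral_const_mul, hφ1, mul_one]
  have hM := fun a b => aux_mono_s16 n a b φ hφ.continuous hφ0 hs
  have hadd : ∀ x t (c : ℝ), ∫ y, (d (x - t • y) + c) * φ y = Φ (x, t) + c := by
    intro x t c
    simp_rw [add_mul]
    rw [integral_add (aux_int n _ φ hφ.continuous hs (hcont x t))
      (aux_int n (fun _ => c) φ hφ.continuous hs continuousOn_const), hcst]
  have hdec : ∀ x s t, 0 < s → s < t → Φ (x, t) + (t - s) / 2 ≤ Φ (x, s) := by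
    intro x s t _ hst
    rw [← hadd]
    refine hM _ _ ((hcont x t).add continuousOn_const) (hcont x s) fun y hy => ?_
    have h1 := hd1 (x - t • y) ((t - s) • y)
    have h2 := hd3 (((t - s) / 2) • 1) ((t - s) • y) (fun i => by
      simp
      nlinarith [(hy i).1])
    rw [hd4] at h2
    rw [show x - t • y + (t - s) • y = x - s • y by module] at h1
    linarith
  have hmono : ∀ x y t, (∀ i, x i ≤ y i) → Φ (x, t) ≤ Φ (y, t) := by
    intro x y t h
    exact hM _ _ (hcont x t) (hcont y t) fun z _ => hd3 _ _ fun i => by simpa using h i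
  have hlow : ∀ x t, 0 < t → d x - t ≤ Φ (x, t) := by
    intro x t ht
    rw [← hcst (d x - t)]
    refine hM _ _ continuousOn_const (hcont x t) fun y hy => ?_
    have h1 := hd1 x (-(t • y))
    have h2 := hd3 ((-t) • 1) (-(t • y)) (fun i => by
      simp
      nlinarith [(hy i).2])
    rw [hd4] at h2
    rw [sub_eq_add_neg x]
    linarith
  have hupp : ∀ x t, 0 < t → Φ (x, t) ≤ d x - t / 2 := by
    intro x t ht
    rw [← hcst (d x - t / 2)]
    refine hM _ _ (hcont x t) continuousOn_const fun y hy => ?_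
    have h1 := hd1 (x - t • y) (t • y)
    have h2 := hd3 ((t / 2) • 1) (t • y) (fun i => by
      simp
      nlinarith [(hy i).1])
    rw [hd4] at h2
    rw [sub_add_cancel] at h1
    linarith
  have hΦp : ∀ x t (σ : Equiv.Perm (Fin n)), Φ (fun i => x (σ i), t) = Φ (x, t) := by
    intro x t σ
    show ∫ y, d ((fun i => x (σ i)) - t • y) * φ y = ∫ y, d (x - t • y) * φ y
    rw [← aux_perm_s16 n (fun y => d ((fun i => x (σ i)) - t • y) * φ y) σ]
    refine integral_congr_ae (Eventually.of_forall fun y => ?_)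
    simp only
    rw [hφp σ y, ← hd5 (x - t • y) σ]
    rfl
  have hex : ∀ x ∈ S, ∃ t, d x ≤ t ∧ t ≤ 2 * d x ∧ Φ (x, t) = 0 := by
    intro x hx
    have hdx := hd7 x hx
    have hc : ContinuousOn (fun t => Φ (x, t)) (Set.Icc (d x) (2 * d x)) := by
      refine hΦs.continuousOn.comp (by fun_prop) fun t ht => ?_
      exact hdx.trans_le ht.1
    have := intermediate_value_Icc' (by linarith) hc
    obtain ⟨t, ht, h0⟩ := this (show (0:ℝ) ∈ _ from
      ⟨by linarith [hupp x (2 * d x) (by linarith)], by linarith [hlow x (d x) hdx]⟩)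
    exact ⟨t, ht.1, ht.2, h0⟩
  classical
  choose! δ hδ1 hδ2 hδ3 using hex
  have hδ0 : ∀ x ∈ S, 0 < δ x := fun x hx => (hd7 x hx).trans_le (hδ1 x hx)
  have hcmp : ∀ x ∈ S, ∀ t, 0 < t → 0 ≤ Φ (x, t) → t ≤ δ x := by
    intro x hx t ht h
    by_contra! hlt
    have := hdec x _ _ (hδ0 x hx) hlt
    rw [hδ3 x hx] at this
    linarith
  refine ⟨δ, ?_, hδ0, ?_, ?_, ?_, hconv, ?_⟩
  · intro x hx
    apply ContDiffAt.contDiffWithinAt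
    refine aux_implicit Φ δ x (hΦs.contDiffAt (hopen'.mem_nhds (hδ0 x hx))) hdec (hδ0 x hx) ?_
    filter_upwards [hopen.mem_nhds hx] with y hy
    exact ⟨hδ0 y hy, hδ3 y hy⟩
  · intro x hx
    apply hd6
    linarith [hδ2 x hx, hd7 x hx]
  · intro x hx σ
    have hx' := hperm x hx σ
    apply le_antisymm
    · apply hcmp x hx _ (hδ0 _ hx')
      rw [← hΦp x _ σ, hδ3 _ hx']
    · apply hcmp _ hx' _ (hδ0 _ hx)
      rw [hΦp x _ σ, hδ3 _ hx]
  · intro x hx y hxy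
    apply hcmp y (hup x hx y hxy) _ (hδ0 x hx)
    rw [← hδ3 x hx]
    exact hmono _ _ _ hxy
  · intro x hx y hy a b ha hb hab
    simp only [smul_eq_mul]
    have p1 := hδ0 x hx
    have p2 := hδ0 y hy
    apply hcmp _ (hconv hx hy ha hb hab)
    · rcases ha.eq_or_lt with rfl | ha
      · have : b = 1 := by linarith
        subst this
        simpa
      · have := mul_pos ha p1
        have := mul_nonneg hb p2.le
        linarith
    · have e : (0:ℝ) = a * Φ (x, δ x) + b * Φ (y, δ y) := by
        rw [hδ3 x hx, hδ3 y hy]; simp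
      rw [e]
      show a * (∫ z, d (x - δ x • z) * φ z) + b * (∫ z, d (y - δ y • z) * φ z) ≤ _
      rw [← integral_const_mul, ← integral_const_mul, ← integral_add
        ((aux_int n _ φ hφ.continuous hs (hcont _ _)).const_mul a)
        ((aux_int n _ φ hφ.continuous hs (hcont _ _)).const_mul b)]
      simp_rw [← mul_assoc, ← add_mul]
      refine hM _ _ ((continuousOn_const.mul (hcont _ _)).add (continuousOn_const.mul (hcont _ _))) (hcont _ _) fun z hz => ?_
      have := hdconc.2 (Set.mem_univ (x - δ x • z)) (Set.mem_univ (y - δ y • z)) ha hb hab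
      simp only [smul_eq_mul] at this
      refine this.trans (le_of_eq ?_)
      congr 1
      module


/-- Proposition 3.3 of the paper (smooth regularization of `f_∞`): let `S = Γ_∞ ⊆ ℝⁿ` be an
open convex symmetric cone containing the positive orthant, on which all partial sums
`Σ_{k≠i} λ_k` are positive, and let `F` be concave, symmetric, monotone nondecreasing,
strictly positive on `S`, with `F(Rλ) → +∞`. Then for every `ε ∈ (0, 1/2)` there is a
function `g` that is `C^∞` on `S`, symmetric, satisfies `(1−ε)F ≤ g ≤ F + (π/2)ε`, is concave
with positive partial derivatives on `S`, and `g(Rλ) → +∞` for every `λ ∈ S`. -/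
theorem stmt_16 (n : ℕ) (S : Set (Fin n → ℝ))
    (hopen : IsOpen S) (hconv : Convex ℝ S)
    (hcone : ∀ x ∈ S, ∀ t : ℝ, 0 < t → t • x ∈ S)
    (hperm : ∀ x ∈ S, ∀ σ : Equiv.Perm (Fin n), (fun i => x (σ i)) ∈ S)
    (horthant : {x : Fin n → ℝ | ∀ i, 0 < x i} ⊆ S)
    (hpos_sum : ∀ x ∈ S, ∀ i : Fin n, 0 < ∑ k ∈ Finset.univ.erase i, x k)
    (F : (Fin n → ℝ) → ℝ)
    (hFconc : ConcaveOn ℝ S F)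
    (hFperm : ∀ x ∈ S, ∀ σ : Equiv.Perm (Fin n), F (fun i => x (σ i)) = F x)
    (hFmono : ∀ x ∈ S, ∀ y ∈ S, (∀ i, x i ≤ y i) → F x ≤ F y)
    (hFpos : ∀ x ∈ S, 0 < F x)
    (hFproper : ∀ x ∈ S,
      Filter.Tendsto (fun R : ℝ => F (R • x)) Filter.atTop Filter.atTop) :
    ∀ ε : ℝ, 0 < ε → ε < 1 / 2 →
      ∃ g : (Fin n → ℝ) → ℝ,
        ContDiffOn ℝ (⊤ : ℕ∞) g S ∧
        (∀ x ∈ S, ∀ σ : Equiv.Perm (Fin n), g (fun i => x (σ i)) = g x) ∧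
        (∀ x ∈ S, (1 - ε) * F x ≤ g x ∧ g x ≤ F x + (Real.pi / 2) * ε) ∧
        ConcaveOn ℝ S g ∧
        (∀ x ∈ S, ∀ i : Fin n, 0 < fderiv ℝ g x (Pi.single i 1)) ∧
        (∀ x ∈ S,
          Filter.Tendsto (fun R : ℝ => g (R • x)) Filter.atTop Filter.atTop) := by
  intro ε hε hε2
  classical
  have hpos : ∀ p : Fin n → ℝ, (∀ i, 0 < p i) → p ∈ S := fun p hp => horthant hp
  have hone : (1 : Fin n → ℝ) ∈ S := hpos _ fun i => by simp
  have hn : 0 < n := by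
    rcases Nat.eq_zero_or_pos n with rfl | h
    · exfalso
      have h1 := hFproper 1 hone
      have h2 : (fun R : ℝ => F (R • (1 : Fin 0 → ℝ))) = fun _ => F 1 := by
        ext R
        congr 1
        exact Subsingleton.elim _ _
      rw [h2] at h1
      exact not_tendsto_const_atTop _ _ h1
    · exact h
  have hadd : ∀ x ∈ S, ∀ y ∈ S, x + y ∈ S := by
    intro x hx y hy
    have := hcone _ (hconv hx hy (by norm_num : (0:ℝ) ≤ 1/2) (by norm_num : (0:ℝ) ≤ 1/2)
      (by norm_num)) 2 (by norm_num)
    convert this using 1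
    module
  have hup : ∀ x ∈ S, ∀ y, (∀ i, x i ≤ y i) → y ∈ S := by
    intro x hx y hxy
    have hc : Continuous (fun t : ℝ => x - t • (1 : Fin n → ℝ)) := by fun_prop
    have h0 : ∀ᶠ t : ℝ in 𝓝 0, x - t • (1 : Fin n → ℝ) ∈ S :=
      hc.continuousAt.eventually (by simpa using hopen.mem_nhds hx)
    have h1 : ∀ᶠ t : ℝ in 𝓝[>] 0, x - t • (1 : Fin n → ℝ) ∈ S ∧ 0 < t :=
      (h0.filter_mono nhdsWithin_le_nhds).and self_mem_nhdsWithin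
    obtain ⟨t, ht, ht0⟩ := h1.exists
    have := hadd _ ht (y - x + t • 1) (hpos _ fun i => by
      have := hxy i
      simp
      linarith)
    convert this using 1
    abel
  have hsum : ∀ x ∈ S, 0 < ∑ k, x k := by
    intro x hx
    have h1 : 0 < ∑ i : Fin n, ∑ k ∈ Finset.univ.erase i, x k :=
      Finset.sum_pos (fun i _ => hpos_sum x hx i) ⟨⟨0, hn⟩, Finset.mem_univ _⟩
    have h2 : ∀ i : Fin n, ∑ k ∈ Finset.univ.erase i, x k = ∑ k, x k - x i := by
      intro i
      rw [← Finset.sum_erase_add _ _ (Finset.mem_univ i)]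
      ring
    simp_rw [h2] at h1
    rw [Finset.sum_sub_distrib] at h1
    simp at h1
    have hn1 : (1:ℝ) ≤ n := by exact_mod_cast hn
    by_contra! h
    nlinarith
  obtain ⟨φ, hφ, hφ0, hφ1, hs, hφp⟩ := aux_kernel n
  obtain ⟨d, hd1, hd2, hd3, hd4, hd5, hd6, hd7⟩ :=
    aux_dist n hn S hopen hadd hcone hperm hup hone hsum
  obtain ⟨δ, hδs, hδ0, hδ4, hδp, hδm, hδc⟩ := aux_delta n S hopen hperm hup hconv φ hφ hφ0 hφ1 hs
    hφp d hd1 hd2 hd3 hd4 hd5 hd6 hd7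
  have hFc : ContinuousOn F S := hFconc.continuousOn hopen
  let f := S.indicator F
  have hfS : ∀ x ∈ S, f x = F x := fun x hx => Set.indicator_of_mem hx F
  have hfl : LocallyIntegrable f volume := by
    rw [locallyIntegrable_iff]
    intro K hK
    obtain ⟨M, hM⟩ := hK.isBounded.exists_norm_le
    refine IntegrableOn.of_bound hK.measure_lt_top ?_ (F ((|M| + 1) • 1)) ?_
    · apply AEStronglyMeasurable.restrict
      exact (aestronglyMeasurable_indicator_iff hopen.measurableSet).2
        (hFc.aestronglyMeasurable hopen.measurableSet)
    · refine (ae_restrict_iff' hK.measurableSet).2 (Eventually.of_forall fun x hx => ?_)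
      have hMS : ((|M| + 1) • (1 : Fin n → ℝ)) ∈ S := hcone _ hone _ (by positivity)
      by_cases hxS : x ∈ S
      · rw [hfS x hxS, Real.norm_of_nonneg (hFpos x hxS).le]
        apply hFmono x hxS _ hMS
        intro i
        have h1 := (abs_le.1 (norm_le_pi_norm x i)).2
        have h2 := hM x hx
        have h3 := le_abs_self M
        simp
        linarith
      · simp only [f, Set.indicator_of_notMem hxS, norm_zero]
        exact (hFpos _ hMS).le
  have hmem : ∀ x ∈ S, ∀ t : ℝ, 0 < t → ∀ y : Fin n → ℝ, (∀ i, 0 ≤ y i) → x + t • y ∈ S := by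
    intro x hx t ht y hy
    refine hup x hx _ fun i => ?_
    have := mul_nonneg ht.le (hy i)
    simpa using this
  have hcont : ∀ x ∈ S, ∀ t : ℝ, 0 < t → ContinuousOn (fun y => f (x + t • y)) (Set.Icc 0 1) := by
    intro x hx t ht
    have h1 : ContinuousOn f S := hFc.congr fun x hx => hfS x hx
    refine h1.comp (by fun_prop) fun y hy => hmem x hx t ht y hy.1
  have hcst : ∀ c : ℝ, ∫ y, c * φ y = c := by
    intro c
    rw [integral_const_mul, hφ1, mul_one]
  have hM := fun a b => aux_mono_s16 n a b φ hφ.continuous hφ0 hs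
  let H : (Fin n → ℝ) × ℝ → ℝ := fun q => ∫ y, f (q.1 + q.2 • y) * φ y
  have hHs : ContDiffOn ℝ (⊤ : ℕ∞) H {q | 0 < q.2} :=
    aux_smooth n f φ hfl hφ fun y hy => aux_norm n y (hs y hy)
  let c := ε / 4
  have hc : 0 < c := by positivity
  have hcδ : ∀ x ∈ S, 0 < c * δ x := fun x hx => mul_pos hc (hδ0 x hx)
  let G : (Fin n → ℝ) → ℝ := fun x => H (x, c * δ x)
  have hGs : ContDiffOn ℝ (⊤ : ℕ∞) G S := by
    refine hHs.comp (contDiffOn_id.prodMk (contDiffOn_const.mul hδs)) fun x hx => hcδ x hx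
  have hy0 : ∀ y : Fin n → ℝ, (∀ i, 1/2 ≤ y i ∧ y i ≤ 1) → ∀ i, 0 ≤ y i := by
    intro y hy i
    linarith [(hy i).1]
  have hGp : ∀ x ∈ S, ∀ σ : Equiv.Perm (Fin n), G (fun i => x (σ i)) = G x := by
    intro x hx σ
    show ∫ y, f ((fun i => x (σ i)) + (c * δ (fun i => x (σ i))) • y) * φ y =
      ∫ y, f (x + (c * δ x) • y) * φ y
    rw [hδp x hx σ, ← aux_perm_s16 n (fun y => f ((fun i => x (σ i)) + (c * δ x) • y) * φ y) σ]
    refine integral_congr_ae (Eventually.of_forall fun y => ?_)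
    simp only
    rw [hφp σ y]
    by_cases h : φ y = 0
    · simp [h]
    · have h1 := hmem x hx _ (hcδ x hx) y (hy0 y (hs y h))
      have h2 := hperm _ h1 σ
      have h3 := hFperm _ h1 σ
      rw [hfS _ h1, ← h3, ← hfS _ h2]
      rfl
  have hGlow : ∀ x ∈ S, F x ≤ G x := by
    intro x hx
    rw [← hcst (F x)]
    refine hM _ _ continuousOn_const (hcont x hx _ (hcδ x hx)) fun y hy => ?_
    have h1 := hmem x hx _ (hcδ x hx) y (hy0 y hy)
    rw [hfS _ h1]
    apply hFmono _ hx _ h1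
    intro i
    have := mul_nonneg (hcδ x hx).le (hy0 y hy i)
    simpa using this
  have hGup : ∀ x ∈ S, G x ≤ (1 + ε) * F x := by
    intro x hx
    rw [← hcst ((1 + ε) * F x)]
    refine hM _ _ (hcont x hx _ (hcδ x hx)) continuousOn_const fun y hy => ?_
    have h1 := hmem x hx _ (hcδ x hx) y (hy0 y hy)
    have h2 := hmem x hx _ (hcδ x hx) 1 (fun i => by simp)
    rw [hfS _ h1]
    have h3 : F (x + (c * δ x) • y) ≤ F (x + (c * δ x) • 1) := by
      apply hFmono _ h1 _ h2
      intro i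
      have := mul_le_mul_of_nonneg_left (hy i).2 (hcδ x hx).le
      simpa using this
    refine h3.trans ?_
    have h4 := hδ4 x hx
    have hp : 0 < 1 + ε := by linarith
    have h5 := hFconc.2 h2 h4 (by positivity : 0 ≤ 1 / (1 + ε)) (by positivity : 0 ≤ ε / (1 + ε))
      (by field_simp)
    have h6 : (1 / (1 + ε)) • (x + (c * δ x) • (1 : Fin n → ℝ)) +
        (ε / (1 + ε)) • (x - (δ x / 4) • (1 : Fin n → ℝ)) = x := by
      ext i
      simp [c]
      field_simp
      ring
    rw [h6] at h5
    simp only [smul_eq_mul] at h5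
    have h7 : 0 ≤ ε / (1 + ε) * F (x - (δ x / 4) • (1 : Fin n → ℝ)) :=
      mul_nonneg (by positivity) (hFpos _ h4).le
    have h8 : 1 / (1 + ε) * F (x + (c * δ x) • 1) ≤ F x := by linarith
    rwa [one_div, inv_mul_le_iff₀ hp] at h8
  have hGm : ∀ x ∈ S, ∀ x' ∈ S, (∀ i, x i ≤ x' i) → G x ≤ G x' := by
    intro x hx x' hx' hxx
    refine hM _ _ (hcont x hx _ (hcδ x hx)) (hcont x' hx' _ (hcδ x' hx')) fun y hy => ?_
    have h1 := hmem x hx _ (hcδ x hx) y (hy0 y hy)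
    have h2 := hmem x' hx' _ (hcδ x' hx') y (hy0 y hy)
    rw [hfS _ h1, hfS _ h2]
    apply hFmono _ h1 _ h2
    intro i
    have h3 := mul_le_mul_of_nonneg_right
      (mul_le_mul_of_nonneg_left (hδm x hx x' hxx) hc.le) (hy0 y hy i)
    have := hxx i
    simp
    linarith
  have hGc : ConcaveOn ℝ S G := by
    refine ⟨hconv, fun x hx x' hx' a b ha hb hab => ?_⟩
    have hz := hconv hx hx' ha hb hab
    show a * (∫ y, f (x + (c * δ x) • y) * φ y) + b * (∫ y, f (x' + (c * δ x') • y) * φ y) ≤ _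
    have c1 := hcont x hx _ (hcδ x hx)
    have c2 := hcont x' hx' _ (hcδ x' hx')
    rw [← integral_const_mul, ← integral_const_mul, ← integral_add
        ((aux_int n _ φ hφ.continuous hs c1).const_mul a)
        ((aux_int n _ φ hφ.continuous hs c2).const_mul b)]
    simp_rw [← mul_assoc, ← add_mul]
    refine hM _ _ ((continuousOn_const.mul c1).add (continuousOn_const.mul c2))
      (hcont _ hz _ (hcδ _ hz)) fun y hy => ?_
    have h1 := hmem x hx _ (hcδ x hx) y (hy0 y hy)
    have h2 := hmem x' hx' _ (hcδ x' hx') y (hy0 y hy)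
    have h3 := hmem _ hz _ (hcδ _ hz) y (hy0 y hy)
    rw [hfS _ h1, hfS _ h2, hfS _ h3]
    have h4 := hFconc.2 h1 h2 ha hb hab
    refine h4.trans (hFmono _ (hconv h1 h2 ha hb hab) _ h3 fun i => ?_)
    have h5 := hδc.2 hx hx' ha hb hab
    have h6 := mul_le_mul_of_nonneg_right (mul_le_mul_of_nonneg_left h5 hc.le) (hy0 y hy i)
    simp only [smul_eq_mul] at h6
    simp only [Pi.add_apply, Pi.smul_apply, smul_eq_mul]
    linarith
  let L : (Fin n → ℝ) →L[ℝ] ℝ := ∑ k, ContinuousLinearMap.proj k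
  have hL : ∀ x, L x = ∑ k, x k := by
    intro x
    simp [L]
  let E : (Fin n → ℝ) → ℝ := fun x => 1 - Real.exp (-L x)
  have hEs : ContDiff ℝ (⊤ : ℕ∞) E := contDiff_const.sub (Real.contDiff_exp.comp L.contDiff.neg)
  have hEc : ConcaveOn ℝ S E := by
    refine ⟨hconv, fun x hx x' hx' a b ha hb hab => ?_⟩
    have := convexOn_exp.2 (Set.mem_univ (-L x)) (Set.mem_univ (-L x')) ha hb hab
    simp only [smul_eq_mul] at this
    simp only [E, map_add, map_smul, smul_eq_mul]
    rw [show -(a * L x + b * L x') = a * -L x + b * -L x' by ring]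
    nlinarith
  have hglow : ∀ x ∈ S, (1 - ε) * F x ≤ (1 - ε) * G x + ε * E x := by
    intro x hx
    have h1 : 0 ≤ E x := by
      have := hsum x hx
      have : Real.exp (-L x) ≤ 1 := Real.exp_le_one_iff.2 (by rw [hL]; linarith)
      simp only [E]
      linarith
    have h2 := mul_le_mul_of_nonneg_left (hGlow x hx) (by linarith : 0 ≤ 1 - ε)
    have := mul_nonneg hε.le h1
    linarith
  refine ⟨fun x => (1 - ε) * G x + ε * E x, ?_, ?_, ?_, ?_, ?_, ?_⟩
  · exact (contDiffOn_const.mul hGs).add (contDiffOn_const.mul hEs.contDiffOn)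
  · intro x hx σ
    have : L (fun i => x (σ i)) = L x := by
      rw [hL, hL]
      exact Equiv.sum_comp σ x
    simp only [E, this, hGp x hx σ]
  · intro x hx
    refine ⟨hglow x hx, ?_⟩
    have h1 : E x ≤ 1 := by
      have := Real.exp_pos (-L x)
      simp only [E]
      linarith
    have h2 := mul_le_mul_of_nonneg_left (hGup x hx) (by linarith : 0 ≤ 1 - ε)
    have h3 := mul_le_mul_of_nonneg_left h1 hε.le
    have h4 := Real.pi_gt_three
    have h5 := mul_pos (mul_pos hε hε) (hFpos x hx)
    nlinarith
  · have h1 := (hGc.smul (by linarith : 0 ≤ 1 - ε)).add (hEc.smul hε.le)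
    exact h1
  · intro x hx i
    have hGd : DifferentiableAt ℝ G x :=
      (hGs.contDiffAt (hopen.mem_nhds hx)).differentiableAt (by simp)
    have hEd : HasFDerivAt E (-(Real.exp (-L x) • (-L))) x :=
      ((L.hasFDerivAt.neg).exp).const_sub 1
    have h1 := (hGd.hasFDerivAt.const_mul (1 - ε)).add (hEd.const_mul ε)
    have h2 : fderiv ℝ (fun x => (1 - ε) * G x + ε * E x) x = _ := h1.fderiv
    rw [h2]
    have h3 : L (Pi.single i 1) = 1 := by
      rw [hL]
      simp
    have h4 : 0 ≤ fderiv ℝ G x (Pi.single i 1) := by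
      have hl : HasDerivAt (fun t : ℝ => x + t • (Pi.single i 1 : Fin n → ℝ)) (Pi.single i 1) 0 := by
        simpa using ((hasDerivAt_id (0:ℝ)).smul_const (Pi.single i 1 : Fin n → ℝ)).const_add x
      have hd : HasDerivAt (fun t : ℝ => G (x + t • (Pi.single i 1 : Fin n → ℝ)))
          (fderiv ℝ G x (Pi.single i 1)) 0 := by
        have h : HasFDerivAt G (fderiv ℝ G x) (x + (0:ℝ) • (Pi.single i 1 : Fin n → ℝ)) := by
          simpa using hGd.hasFDerivAt
        exact h.comp_hasDerivAt (0:ℝ) hl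
      have hmon : MonotoneOn (fun t : ℝ => G (x + t • (Pi.single i 1 : Fin n → ℝ))) (Set.Ici 0) := by
        have hsn : ∀ j, 0 ≤ (Pi.single i 1 : Fin n → ℝ) j := by
          intro j
          by_cases h : j = i
          · subst h; simp
          · simp [h]
        have hin : ∀ t : ℝ, 0 ≤ t → x + t • (Pi.single i 1 : Fin n → ℝ) ∈ S := by
          intro t ht
          refine hup x hx _ fun j => ?_
          have := mul_nonneg ht (hsn j)
          simpa only [Pi.add_apply, Pi.smul_apply, smul_eq_mul, le_add_iff_nonneg_right] using this
        intro s hs t ht hst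
        apply hGm _ (hin s hs) _ (hin t ht)
        intro j
        have := mul_le_mul_of_nonneg_right hst (hsn j)
        simpa only [Pi.add_apply, Pi.smul_apply, smul_eq_mul, add_le_add_iff_left] using this
      have := hmon.derivWithin_nonneg (x := 0)
      rwa [hd.hasDerivWithinAt.derivWithin (uniqueDiffOn_Ici 0 0 (by simp))] at this
    have h5 := Real.exp_pos (-L x)
    have h6 : 0 ≤ (1 - ε) * fderiv ℝ G x (Pi.single i 1) := mul_nonneg (by linarith) h4
    have h7 := mul_pos hε h5
    simp [h3]
    linarith
  · intro x hx
    refine tendsto_atTop_mono' _ ?_ ((hFproper x hx).const_mul_atTop (by linarith : 0 < 1 - ε))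
    filter_upwards [eventually_gt_atTop 0] with R hR
    exact hglow _ (hcone x hx R hR)
end

section
/- Let u : [0, +∞) → [0, +∞) be a nonincreasing function, and suppose there exist μ > 0, B₀ > 0 and s₀ ≥ 0 such that t·u(s + t) ≤ B₀·u(s)^{1+μ} for every t > 0 and every s ≥ s₀. Then u(s) = 0 for every s ≥ s₀ + 2·B₀·u(s₀)^μ / (1 − 2^{−μ}). -/
/-- Lemma 4.6 of the paper (De Giorgi's iteration lemma): if `u : [0,∞) → [0,∞)` is
nonincreasing and `t·u(s+t) ≤ B₀·u(s)^{1+μ}` for all `t > 0` and `s ≥ s₀`, then `u ≡ 0` on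
`[s₀ + 2B₀·u(s₀)^μ/(1 − 2^{−μ}), ∞)`. -/
theorem stmt_18 (u : ℝ → ℝ)
    (hnonneg : ∀ s : ℝ, 0 ≤ s → 0 ≤ u s)
    (hmono : ∀ s t : ℝ, 0 ≤ s → s ≤ t → u t ≤ u s)
    (μ B₀ s₀ : ℝ) (hμ : 0 < μ) (hB₀ : 0 < B₀) (hs₀ : 0 ≤ s₀)
    (hiter : ∀ t : ℝ, 0 < t → ∀ s : ℝ, s₀ ≤ s → t * u (s + t) ≤ B₀ * u s ^ (1 + μ)) :
    ∀ s : ℝ, s₀ + 2 * B₀ * u s₀ ^ μ / (1 - 2 ^ (-μ)) ≤ s → u s = 0 := by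
  intro s hs
  have hr : (2:ℝ) ^ (-μ) = (1/2:ℝ) ^ μ := by
    rw [Real.rpow_neg (by norm_num), one_div, Real.inv_rpow (by norm_num)]
  rw [hr] at hs
  have hr0 : 0 < (1/2:ℝ) ^ μ := by positivity
  have hr1 : (1/2:ℝ) ^ μ < 1 := Real.rpow_lt_one (by norm_num) (by norm_num) hμ
  have hA0 : 0 ≤ u s₀ := hnonneg _ hs₀
  have hpow : ∀ n : ℕ, ((1/2:ℝ) ^ n) ^ μ = ((1/2:ℝ) ^ μ) ^ n := by
    intro n
    rw [← Real.rpow_natCast, ← Real.rpow_natCast, ← Real.rpow_mul (by norm_num),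
      ← Real.rpow_mul (by norm_num), mul_comm]
  generalize (1/2:ℝ) ^ μ = r at *
  have h1r : 0 < 1 - r := by linarith
  have hC0 : 0 ≤ 2 * B₀ * u s₀ ^ μ / (1 - r) := by positivity
  have hs0s : s₀ ≤ s := by linarith
  have hus0 : 0 ≤ u s := hnonneg _ (by linarith)
  rcases hA0.eq_or_lt with hA | hA
  · exact le_antisymm (by rw [hA]; exact hmono _ _ hs₀ hs0s) hus0
  have hAμ : 0 < u s₀ ^ μ := Real.rpow_pos_of_pos hA μ
  obtain ⟨C, hC⟩ : ∃ C, C = 2 * B₀ * u s₀ ^ μ / (1 - r) := ⟨_, rfl⟩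
  have hC' : C * (1 - r) = 2 * B₀ * u s₀ ^ μ := by rw [hC]; field_simp
  rw [← hC] at hs hC0
  have key : ∀ n : ℕ, u (s₀ + C * (1 - r ^ n)) ≤ u s₀ * (1/2) ^ n := by
    intro n
    induction n with
    | zero => simp
    | succ n ih =>
      have hrn : 0 < r ^ n := by positivity
      have hrn1 : r ^ n ≤ 1 := pow_le_one₀ hr0.le hr1.le
      have hp : 0 ≤ C * (1 - r ^ n) := mul_nonneg hC0 (by linarith)
      have ht : 0 < 2 * B₀ * u s₀ ^ μ * r ^ n := by positivity
      have h := hiter _ ht (s₀ + C * (1 - r ^ n)) (by linarith)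
      have e : s₀ + C * (1 - r ^ n) + 2 * B₀ * u s₀ ^ μ * r ^ n
          = s₀ + C * (1 - r ^ (n+1)) := by rw [← hC']; ring
      rw [e] at h
      have h2 : u (s₀ + C * (1 - r ^ n)) ^ (1 + μ) ≤ (u s₀ * (1/2) ^ n) ^ (1 + μ) :=
        Real.rpow_le_rpow (hnonneg _ (by linarith)) ih (by linarith)
      have h3 : (u s₀ * (1/2) ^ n) ^ (1 + μ) = u s₀ * (1/2) ^ n * (u s₀ ^ μ * r ^ n) := by
        rw [Real.rpow_add (by positivity), Real.rpow_one,
          Real.mul_rpow hA.le (by positivity), hpow]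
      rw [h3] at h2
      have h4 := h.trans (mul_le_mul_of_nonneg_left h2 hB₀.le)
      refine le_of_mul_le_mul_left (h4.trans_eq ?_) ht
      ring
  have lim : Filter.Tendsto (fun n : ℕ => u s₀ * (1/2:ℝ) ^ n) Filter.atTop (nhds (u s₀ * 0)) :=
    (tendsto_pow_atTop_nhds_zero_of_lt_one (by norm_num) (by norm_num)).const_mul _
  rw [mul_zero] at lim
  refine le_antisymm (ge_of_tendsto' lim fun n => ?_) hus0
  have hrn : 0 < r ^ n := by positivity
  have hrn1 : r ^ n ≤ 1 := pow_le_one₀ hr0.le hr1.le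
  have hp : 0 ≤ C * (1 - r ^ n) := mul_nonneg hC0 (by linarith)
  refine (hmono _ _ (by linarith) ?_).trans (key n)
  nlinarith [mul_nonneg hC0 hrn.le]
end
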